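/- Let $\varphi$ be a hyperbolic automorphism of $\mathbb{D}$ with attracting fixed point $a$ and repelling fixed point $b$ on $\partial\mathbb{D}$, and let $\psi$ be holomorphic on $\mathbb{D}$, continuous on $\overline{\mathbb{D}}$, and bounded away from zero. Then the spectrum of $C_{\psi,\varphi}$ on the Hardy space $H^2(\mathbb{D})$ is the annulus $\{\lambda \in \mathbb{C} : \min(|\psi(a)|\rho^{1/2}, |\psi(b)|\rho^{-1/2}) \leq |\lambda| \leq \max(|\psi(a)|\rho^{1/2}, |\psi(b)|\rho^{-1/2})\}$, where $\rho = \varphi'(a)^{-1} = \varphi'(b) > 1$. -/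

import Mathlib

open Metric Filter

/-- The Hardy space `H²(𝔻)`, modelled as the space of square-summable Taylor coefficient
sequences. -/
abbrev H2 : Type := lp (fun _ : ℕ => ℂ) 2

/-- The holomorphic function on the unit disc associated to an element of `H²(𝔻)`. -/
noncomputable def H2.toFun (f : H2) (z : ℂ) : ℂ := ∑' n : ℕ, f n * z ^ n

/-!
Every automorphism `φ` of the disc is a Möbius map, and there is a weight `k`, holomorphic across
the boundary, for which `U = C_{k,φ}` maps reproducing kernels to multiples of reproducing kernels
and is unitary; it satisfies `|k(a)| = ρ^(-1/2)` and `|k(b)| = ρ^(1/2)`. Hence `C_{ψ,φ} = M_v U`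
with `v = ψ / k`, and `C_{ψ,φ}ⁿ` has the norm of multiplication by `∏_{j<n} v ∘ φ^j`. An orbit of
`φ` leaves given neighbourhoods of `a` and `b` for a bounded number of steps only, so these
products grow at most like `max(|v(a)|, |v(b)|)ⁿ`; the same bound for the inverse confines the
spectrum to the annulus.

Conversely, suppose that `μ` in the open annulus is in the resolvent set, and let `x` be a function
with `x(0) ≠ 0` that vanishes elsewhere on the two-sided orbit of `0`. With `y = (μ - T)⁻¹ x`, the
values at `0` of `Tⁿ y`, `n ∈ ℤ`, are geometric of ratio `μ` on either side of a jump.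
Multiplication by a power of `z - a` or `z - b` intertwines `T` with operators whose
growth rate at one fixed point is changed at will, which makes both halves `o(μⁿ)` and therefore
zero, a contradiction.

If `|v(a)| = |v(b)|` the annulus is a circle. It is filled because multiplication by `exp(s i u)`,
where `u` is a coordinate in which `φ` is the translation by `log ρ`, conjugates `T` to a unimodular
multiple of `T`.
-/

open scoped ComplexConjugate Topology

/-! ### Power series and the Hardy space -/

theorem norm_sq_sum_smul_of_orthonormal {𝕜 ι E : Type*} [RCLike 𝕜] [SeminormedAddCommGroup E]
    [InnerProductSpace 𝕜 E] {e : ι → E} (he : Orthonormal 𝕜 e) (c : ι → 𝕜) (s : Finset ι) :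
    ‖∑ i ∈ s, c i • e i‖ ^ 2 = ∑ i ∈ s, ‖c i‖ ^ 2 := by
  rw [@norm_sq_eq_re_inner 𝕜, he.inner_sum, map_sum]
  exact Finset.sum_congr rfl fun i _ => by rw [RCLike.conj_mul]; norm_cast

theorem norm_sq_toLp_eq_integral {α : Type*} [TopologicalSpace α] [CompactSpace α]
    [MeasurableSpace α] [BorelSpace α] [SecondCountableTopologyEither α ℂ]
    (μ : MeasureTheory.Measure α) [MeasureTheory.IsFiniteMeasure μ] (g : C(α, ℂ)) :
    ‖ContinuousMap.toLp (E := ℂ) 2 μ ℂ g‖ ^ 2 = ∫ t, ‖g t‖ ^ 2 ∂μ := by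
  rw [@norm_sq_eq_re_inner ℂ, MeasureTheory.ContinuousMap.inner_toLp]
  simp_rw [Complex.mul_conj']
  norm_cast

section PowerSeries

variable {c : ℕ → ℂ} {F : ℂ → ℂ}

theorem hasFPowerSeriesOnBall_of_hasSum
    (h : ∀ z ∈ ball (0 : ℂ) 1, HasSum (fun n => c n * z ^ n) (F z)) :
    HasFPowerSeriesOnBall F (.ofScalars ℂ c) 0 1 where
  r_le := by
    refine ENNReal.le_of_forall_nnreal_lt fun r hr => ?_
    have hr1 : (r : ℝ) < 1 := mod_cast hr
    apply FormalMultilinearSeries.le_radius_of_summable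
    simpa using (h (r : ℝ) (by simpa using hr1)).summable.norm
  r_pos := one_pos
  hasSum {y} hy := by
    have hy' : y ∈ ball (0 : ℂ) 1 := by rwa [← eball_ofReal, ENNReal.ofReal_one]
    simpa [FormalMultilinearSeries.ofScalars_apply_eq, mul_comm] using h y hy'

theorem differentiableOn_of_hasSum
    (h : ∀ z ∈ ball (0 : ℂ) 1, HasSum (fun n => c n * z ^ n) (F z)) :
    DifferentiableOn ℂ F (ball 0 1) :=
  (hasFPowerSeriesOnBall_of_hasSum h).differentiableOn.mono <| by
    rw [← eball_ofReal, ENNReal.ofReal_one]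

theorem exists_hasSum_of_differentiableOn (hF : DifferentiableOn ℂ F (ball 0 1)) :
    ∃ c : ℕ → ℂ, ∀ z ∈ ball (0 : ℂ) 1, HasSum (fun n => c n * z ^ n) (F z) := by
  refine ⟨fun n => (n.factorial : ℂ)⁻¹ * iteratedDeriv n F 0, fun z hz => ?_⟩
  refine (Complex.hasSum_taylorSeries_on_ball hF hz).congr_fun fun n => ?_
  simp only [sub_zero, smul_eq_mul]
  ring

/-- Parseval's identity on the circle of radius `r`. -/
theorem hasSum_sq_norm_coeff_circle
    (h : ∀ z ∈ ball (0 : ℂ) 1, HasSum (fun n => c n * z ^ n) (F z)) {r : ℝ}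
    (hr0 : 0 ≤ r) (hr1 : r < 1) :
    HasSum (fun n => ‖c n * (r : ℂ) ^ n‖ ^ 2)
      (∫ t : AddCircle (1 : ℝ), ‖F (r * t.toCircle)‖ ^ 2 ∂AddCircle.haarAddCircle) := by
  have hr : (r : ℂ) ∈ ball (0 : ℂ) 1 := by simpa [abs_of_nonneg hr0] using hr1
  have hsum : Summable fun n : ℕ => (c n * (r : ℂ) ^ n) • fourier (T := (1 : ℝ)) n :=
    .of_norm <| by simpa only [norm_smul, fourier_norm, mul_one] using (h r hr).summable.norm
  obtain ⟨g, hg⟩ := hsum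
  have hgF (t : AddCircle (1 : ℝ)) : g t = F (r * t.toCircle) := by
    have ht : (r * t.toCircle : ℂ) ∈ ball (0 : ℂ) 1 := by simpa [Circle.norm_coe] using hr
    refine (hg.mapL (ContinuousMap.evalCLM ℂ t)).unique ((h _ ht).congr_fun fun n => ?_)
    simp [mul_pow, fourier_apply, AddCircle.toCircle_nsmul, mul_assoc]
  simp_rw [← hgF, ← norm_sq_toLp_eq_integral]
  refine (((hg.mapL (ContinuousMap.toLp (E := ℂ) 2 AddCircle.haarAddCircle ℂ)).norm).pow 2).congr
    fun s => ?_
  simp_rw [map_smul]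
  exact norm_sq_sum_smul_of_orthonormal (orthonormal_fourier.comp _ Nat.cast_injective) _ s

theorem integrable_sq_norm_circle (hF : ContinuousOn F (ball 0 1)) {r : ℝ}
    (hr0 : 0 ≤ r) (hr1 : r < 1) :
    MeasureTheory.Integrable (fun t : AddCircle (1 : ℝ) => ‖F (r * t.toCircle)‖ ^ 2)
      AddCircle.haarAddCircle := by
  have hmaps (t : AddCircle (1 : ℝ)) : (r * t.toCircle : ℂ) ∈ ball (0 : ℂ) 1 := by
    simpa [Circle.norm_coe, abs_of_nonneg hr0] using hr1
  have hcont : Continuous fun t : AddCircle (1 : ℝ) => (r * t.toCircle : ℂ) :=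
    continuous_const.mul (continuous_subtype_val.comp AddCircle.continuous_toCircle)
  exact ((hF.comp_continuous hcont hmaps).norm.pow 2).integrable_of_hasCompactSupport
    (.of_compactSpace _)

end PowerSeries

namespace H2

theorem hasSum_toFun (f : H2) {z : ℂ} (hz : z ∈ ball (0 : ℂ) 1) :
    HasSum (fun n => f n * z ^ n) (f.toFun z) := by
  refine (Summable.of_norm_bounded (g := fun n => ‖f‖ * ‖z‖ ^ n)
    ((summable_geometric_of_lt_one (norm_nonneg _) (mem_ball_zero_iff.1 hz)).mul_left _)
    fun n => ?_).hasSum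
  rw [norm_mul, norm_pow]
  gcongr
  exact lp.norm_apply_le_norm two_ne_zero f n

theorem differentiableOn_toFun (f : H2) : DifferentiableOn ℂ f.toFun (ball 0 1) :=
  differentiableOn_of_hasSum fun _ => f.hasSum_toFun

theorem ext_toFun {f g : H2} (h : ∀ z ∈ ball (0 : ℂ) 1, f.toFun z = g.toFun z) : f = g := by
  have hf := hasFPowerSeriesOnBall_of_hasSum fun _ => f.hasSum_toFun
  have hg := hasFPowerSeriesOnBall_of_hasSum (F := f.toFun) fun z hz =>
    (h z hz) ▸ g.hasSum_toFun hz
  exact lp.ext <| FormalMultilinearSeries.ofScalars_series_injective ℂ ℂ <|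
    hf.hasFPowerSeriesAt.eq_formalMultilinearSeries hg.hasFPowerSeriesAt

theorem integral_circle_le_sq_norm (f : H2) {r : ℝ} (hr0 : 0 ≤ r) (hr1 : r < 1) :
    ∫ t : AddCircle (1 : ℝ), ‖f.toFun (r * t.toCircle)‖ ^ 2 ∂AddCircle.haarAddCircle
      ≤ ‖f‖ ^ 2 := by
  refine hasSum_le (fun n => ?_) (hasSum_sq_norm_coeff_circle (fun _ => f.hasSum_toFun) hr0 hr1)
    (by simpa using lp.hasSum_norm (p := 2) (by norm_num) f)
  rw [norm_mul, norm_pow, Complex.norm_of_nonneg hr0]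
  gcongr
  exact mul_le_of_le_one_right (norm_nonneg _) (pow_le_one₀ hr0 hr1.le)

theorem exists_coeff_eq_of_forall_circle_le {c : ℕ → ℂ} {K : ℝ} (hK : 0 ≤ K)
    (h : ∀ r : ℝ, 0 < r → r < 1 → ∀ s : Finset ℕ, ∑ n ∈ s, ‖c n * (r : ℂ) ^ n‖ ^ 2 ≤ K ^ 2) :
    ∃ f : H2, ⇑f = c ∧ ‖f‖ ≤ K := by
  have sum_le (s : Finset ℕ) : ∑ n ∈ s, ‖c n‖ ^ 2 ≤ K ^ 2 := by
    have hcont : Continuous fun r : ℝ => ∑ n ∈ s, ‖c n * (r : ℂ) ^ n‖ ^ 2 := by fun_prop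
    have hlim := (hcont.tendsto 1).mono_left (nhdsWithin_le_nhds (s := Set.Iio 1))
    simp only [Complex.ofReal_one, one_pow, mul_one] at hlim
    refine le_of_tendsto hlim ?_
    filter_upwards [Ioo_mem_nhdsLT zero_lt_one] with r hr using h r hr.1 hr.2 s
  refine ⟨⟨c, memℓp_gen' (C := K ^ 2) (by simpa using sum_le)⟩, rfl, ?_⟩
  exact lp.norm_le_of_forall_sum_le (by norm_num) hK (by simpa using sum_le)

theorem exists_toFun_eq_mul {g : ℂ → ℂ} {B : ℝ} (hg : DifferentiableOn ℂ g (ball 0 1))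
    (hB : ∀ z ∈ ball (0 : ℂ) 1, ‖g z‖ ≤ B) (f : H2) :
    ∃ F : H2, (∀ z ∈ ball (0 : ℂ) 1, F.toFun z = g z * f.toFun z) ∧ ‖F‖ ≤ B * ‖f‖ := by
  have hB0 : 0 ≤ B := (norm_nonneg _).trans (hB 0 (by simp))
  have hgf : DifferentiableOn ℂ (fun z => g z * f.toFun z) (ball 0 1) :=
    hg.mul f.differentiableOn_toFun
  obtain ⟨c, hc⟩ := exists_hasSum_of_differentiableOn hgf
  obtain ⟨F, hFc, hF⟩ := exists_coeff_eq_of_forall_circle_le (c := c) (K := B * ‖f‖)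
    (by positivity) fun r hr0 hr1 s => by
      have hmaps (t : AddCircle (1 : ℝ)) : (r * t.toCircle : ℂ) ∈ ball (0 : ℂ) 1 := by
        simpa [Circle.norm_coe, abs_of_pos hr0] using hr1
      calc ∑ n ∈ s, ‖c n * (r : ℂ) ^ n‖ ^ 2
          ≤ ∫ t : AddCircle (1 : ℝ), ‖g (r * t.toCircle) * f.toFun (r * t.toCircle)‖ ^ 2
              ∂AddCircle.haarAddCircle :=
            sum_le_hasSum s (fun _ _ => by positivity) (hasSum_sq_norm_coeff_circle hc hr0.le hr1)
        _ ≤ ∫ t : AddCircle (1 : ℝ), B ^ 2 * ‖f.toFun (r * t.toCircle)‖ ^ 2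
              ∂AddCircle.haarAddCircle := by
            refine MeasureTheory.integral_mono
              (integrable_sq_norm_circle hgf.continuousOn hr0.le hr1)
              ((integrable_sq_norm_circle f.differentiableOn_toFun.continuousOn
                hr0.le hr1).const_mul _) fun t => ?_
            simp only [norm_mul, mul_pow]
            gcongr
            exact hB _ (hmaps t)
        _ ≤ (B * ‖f‖) ^ 2 := by
            rw [MeasureTheory.integral_const_mul, mul_pow]
            gcongr
            exact f.integral_circle_le_sq_norm hr0.le hr1
  refine ⟨F, fun z hz => (F.hasSum_toFun hz).unique ?_, hF⟩
  rw [hFc]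
  exact hc z hz

/-- The reproducing kernel `w ↦ (1 - z̄ w)⁻¹` of `H²` at a point `z` of the disc. -/
noncomputable def kernel (z : ball (0 : ℂ) 1) : H2 :=
  ⟨fun n => conj (z : ℂ) ^ n, memℓp_gen <| by
    have hz : ‖(z : ℂ)‖ < 1 := mem_ball_zero_iff.1 z.2
    have hgeom := summable_geometric_of_lt_one (sq_nonneg ‖(z : ℂ)‖)
      (pow_lt_one₀ (norm_nonneg _) hz two_ne_zero)
    simpa [← pow_mul, mul_comm] using hgeom⟩

theorem inner_kernel (z : ball (0 : ℂ) 1) (f : H2) : inner ℂ (kernel z) f = f.toFun z := by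
  refine (lp.hasSum_inner (𝕜 := ℂ) (kernel z) f).unique ?_
  simpa [kernel] using f.hasSum_toFun z.2

theorem toFun_kernel (z : ball (0 : ℂ) 1) {w : ℂ} (hw : w ∈ ball (0 : ℂ) 1) :
    (kernel z).toFun w = (1 - conj (z : ℂ) * w)⁻¹ := by
  have hzw : ‖conj (z : ℂ) * w‖ < 1 := by
    rw [norm_mul, RCLike.norm_conj]
    exact mul_lt_one_of_nonneg_of_lt_one_left (norm_nonneg _) (mem_ball_zero_iff.1 z.2)
      (mem_ball_zero_iff.1 hw).le
  refine ((kernel z).hasSum_toFun hw).unique ?_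
  simpa [kernel, mul_pow] using hasSum_geometric_of_norm_lt_one hzw

theorem toFun_add (f g : H2) (z : ball (0 : ℂ) 1) :
    (f + g).toFun z = f.toFun z + g.toFun z := by
  simp only [← inner_kernel, inner_add_right]

theorem toFun_smul (c : ℂ) (f : H2) (z : ball (0 : ℂ) 1) :
    (c • f).toFun z = c * f.toFun z := by
  simp only [← inner_kernel, inner_smul_right]

/-- Point evaluation at `z`, as a bounded functional on `H²`. -/
noncomputable def eval (z : ball (0 : ℂ) 1) : StrongDual ℂ H2 := innerSL ℂ (kernel z)

theorem eval_apply (z : ball (0 : ℂ) 1) (f : H2) : eval z f = f.toFun z := by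
  rw [eval, innerSL_apply_apply, inner_kernel]

theorem exists_toFun_eq_one : ∃ f : H2, ∀ z ∈ ball (0 : ℂ) 1, f.toFun z = 1 :=
  ⟨kernel ⟨0, by simp⟩, fun z hz => by simp [toFun_kernel _ hz]⟩

instance nontrivial : Nontrivial H2 := by
  obtain ⟨e, he⟩ := exists_toFun_eq_one
  refine ⟨e, 0, fun h => one_ne_zero (α := ℂ) ?_⟩
  rw [← he 0 (by simp), h, toFun]
  simp

end H2

/-! ### Weighted composition operators -/

theorem one_sub_conj_mul_ne_zero {z w : ℂ} (hz : ‖z‖ < 1) (hw : ‖w‖ ≤ 1) :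
    1 - conj z * w ≠ 0 := by
  refine sub_ne_zero.2 fun h => ?_
  have hnorm : ‖z‖ * ‖w‖ = 1 := by rw [← RCLike.norm_conj z, ← norm_mul, ← h, norm_one]
  exact (mul_lt_one_of_nonneg_of_lt_one_left (norm_nonneg z) hz hw).ne hnorm

/-- `T` is the weighted composition operator `C_{ψ,φ} f = ψ · (f ∘ φ)` on `H²`. For `φ = id` it is
the operator of multiplication by `ψ`. -/
def IsWeightedComp (ψ φ : ℂ → ℂ) (T : H2 →L[ℂ] H2) : Prop :=
  ∀ f : H2, ∀ z ∈ ball (0 : ℂ) 1, (T f).toFun z = ψ z * f.toFun (φ z)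

/-- The conditions on `ψ` and `φ` under which `C_{ψ,φ}` is unitary: the adjoint acts on reproducing
kernels by `C_{ψ,φ}^* K_w = conj (ψ w) K_{φ w}`, and `kernel_identity` says that
`⟪C_{ψ,φ}^* K_z, C_{ψ,φ}^* K_w⟫ = ⟪K_z, K_w⟫`. -/
structure IsUnitaryWeight (ψ φ : ℂ → ℂ) : Prop where
  mapsTo : Set.MapsTo φ (ball 0 1) (ball 0 1)
  surjOn : Set.SurjOn φ (ball 0 1) (ball 0 1)
  ne_zero : ∀ z ∈ ball (0 : ℂ) 1, ψ z ≠ 0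
  kernel_identity : ∀ z ∈ ball (0 : ℂ) 1, ∀ w ∈ ball (0 : ℂ) 1,
    ψ z * conj (ψ w) * (1 - conj w * z) = 1 - conj (φ w) * φ z

namespace IsWeightedComp

variable {ψ χ φ η : ℂ → ℂ} {S T : H2 →L[ℂ] H2}

theorem eq (hS : IsWeightedComp ψ φ S) (hT : IsWeightedComp χ η T)
    (hweight : Set.EqOn ψ χ (ball 0 1)) (hsymbol : Set.EqOn φ η (ball 0 1)) : S = T := by
  ext1 f
  exact H2.ext_toFun fun z hz => by rw [hS f z hz, hT f z hz, hweight hz, hsymbol hz]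

theorem one : IsWeightedComp 1 id 1 := fun f z _ => by simp

theorem smul (hT : IsWeightedComp ψ φ T) (c : ℂ) :
    IsWeightedComp (fun z => c * ψ z) φ (c • T) := fun f z hz => by
  rw [smul_apply, H2.toFun_smul c (T f) ⟨z, hz⟩, hT f z hz, mul_assoc]

theorem mul (hS : IsWeightedComp ψ φ S) (hT : IsWeightedComp χ η T)
    (hφ : Set.MapsTo φ (ball 0 1) (ball 0 1)) :
    IsWeightedComp (fun z => ψ z * χ (φ z)) (η ∘ φ) (S * T) := fun f z hz => by
  rw [mul_apply_eq_comp, hS _ z hz, hT f _ (hφ hz), mul_assoc, Function.comp_apply]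

theorem pow (hT : IsWeightedComp ψ φ T) (hφ : Set.MapsTo φ (ball 0 1) (ball 0 1)) (n : ℕ) :
    IsWeightedComp (fun z => ∏ j ∈ Finset.range n, ψ (φ^[j] z)) φ^[n] (T ^ n) := by
  induction n with
  | zero => simpa using! one
  | succ n ih =>
    simp_rw [Finset.prod_range_succ, Function.iterate_succ', pow_succ]
    exact ih.mul hT (hφ.iterate n)

theorem exists_mul_operator {B : ℝ} (hψ : DifferentiableOn ℂ ψ (ball 0 1))
    (hB : ∀ z ∈ ball (0 : ℂ) 1, ‖ψ z‖ ≤ B) :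
    ∃ M : H2 →L[ℂ] H2, IsWeightedComp ψ id M ∧ ‖M‖ ≤ B := by
  choose M hM hnorm using H2.exists_toFun_eq_mul hψ hB
  let L : H2 →ₗ[ℂ] H2 :=
    { toFun := M
      map_add' := fun f g => H2.ext_toFun fun z hz => by
        rw [hM _ z hz, H2.toFun_add _ _ ⟨z, hz⟩, H2.toFun_add _ _ ⟨z, hz⟩, hM _ z hz, hM _ z hz,
          mul_add]
      map_smul' := fun c f => H2.ext_toFun fun z hz => by
        rw [hM _ z hz, RingHom.id_apply, H2.toFun_smul _ _ ⟨z, hz⟩, H2.toFun_smul _ _ ⟨z, hz⟩,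
          hM _ z hz, mul_left_comm] }
  exact ⟨L.mkContinuous B hnorm, hM,
    L.mkContinuous_norm_le ((norm_nonneg _).trans (hB 0 (by simp))) _⟩

theorem adjoint_kernel (hT : IsWeightedComp ψ φ T) (hφ : Set.MapsTo φ (ball 0 1) (ball 0 1))
    (w : ball (0 : ℂ) 1) :
    star T (H2.kernel w) = conj (ψ w) • H2.kernel ⟨φ w, hφ w.2⟩ := by
  refine ext_inner_right ℂ fun f => ?_
  rw [ContinuousLinearMap.star_eq_adjoint, ContinuousLinearMap.adjoint_inner_left, inner_smul_left,
    H2.inner_kernel, H2.inner_kernel, hT f w w.2, Complex.conj_conj]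

theorem mul_star_eq_one (hT : IsWeightedComp ψ φ T) (hψ : IsUnitaryWeight ψ φ) :
    T * star T = 1 := by
  have fixes_kernel (w : ball (0 : ℂ) 1) : T (star T (H2.kernel w)) = H2.kernel w :=
    H2.ext_toFun fun z hz => by
      have hden : 1 - conj (φ w) * φ z ≠ 0 := one_sub_conj_mul_ne_zero
        (mem_ball_zero_iff.1 (hψ.mapsTo w.2)) (mem_ball_zero_iff.1 (hψ.mapsTo hz)).le
      have hden' : 1 - conj (w : ℂ) * z ≠ 0 := one_sub_conj_mul_ne_zero
        (mem_ball_zero_iff.1 w.2) (mem_ball_zero_iff.1 hz).le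
      rw [hT.adjoint_kernel hψ.mapsTo, hT _ z hz, H2.toFun_smul _ _ ⟨φ z, hψ.mapsTo hz⟩,
        H2.toFun_kernel _ (hψ.mapsTo hz), H2.toFun_kernel _ hz, ← mul_assoc, ← div_eq_mul_inv,
        div_eq_iff hden, eq_inv_mul_iff_mul_eq₀ hden', ← hψ.kernel_identity z hz w w.2, mul_comm]
  ext1 f
  refine H2.ext_toFun fun z hz => ?_
  have hinner := congrArg (inner ℂ · f) (fixes_kernel ⟨z, hz⟩)
  simpa only [← ContinuousLinearMap.adjoint_inner_right, ContinuousLinearMap.star_eq_adjoint,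
    ContinuousLinearMap.adjoint_adjoint, H2.inner_kernel] using! hinner

theorem mem_unitary (hT : IsWeightedComp ψ φ T) (hψ : IsUnitaryWeight ψ φ) :
    T ∈ unitary (H2 →L[ℂ] H2) := by
  have hright : T * star T = 1 := hT.mul_star_eq_one hψ
  have injective : Function.Injective T := fun f g hfg => H2.ext_toFun fun w hw => by
    obtain ⟨z, hz, rfl⟩ := hψ.surjOn hw
    have hz' : (T f).toFun z = (T g).toFun z := by rw [hfg]
    rw [hT f z hz, hT g z hz] at hz'
    exact mul_left_cancel₀ (hψ.ne_zero z hz) hz'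
  refine ⟨?_, hright⟩
  ext1 f
  exact injective (DFunLike.congr_fun hright (T f))

end IsWeightedComp

/-! ### Hyperbolic automorphisms -/

/-- The disc automorphism `z ↦ (z - p) / (1 - p̄ z)` sending `p` to `0`. -/
noncomputable def mobius (p z : ℂ) : ℂ := (z - p) / (1 - conj p * z)

section Mobius

variable {p : ℂ}

theorem mapsTo_mobius (hp : ‖p‖ < 1) : Set.MapsTo (mobius p) (ball 0 1) (ball 0 1) := by
  intro z hz
  rw [mem_ball_zero_iff] at hz ⊢
  have hden : 0 < ‖1 - conj p * z‖ := norm_pos_iff.2 (one_sub_conj_mul_ne_zero hp hz.le)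
  have hident : ‖1 - conj p * z‖ ^ 2 - ‖z - p‖ ^ 2 = (1 - ‖p‖ ^ 2) * (1 - ‖z‖ ^ 2) := by
    simp only [Complex.sq_norm, Complex.normSq_apply, Complex.sub_re, Complex.sub_im,
      Complex.mul_re, Complex.mul_im, Complex.conj_re, Complex.conj_im, Complex.one_re,
      Complex.one_im]
    ring
  have hpos : 0 < (1 - ‖p‖ ^ 2) * (1 - ‖z‖ ^ 2) :=
    mul_pos (sub_pos.2 (pow_lt_one₀ (norm_nonneg _) hp two_ne_zero))
      (sub_pos.2 (pow_lt_one₀ (norm_nonneg _) hz two_ne_zero))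
  rw [mobius, norm_div, div_lt_one hden]
  exact lt_of_pow_lt_pow_left₀ 2 hden.le (by linarith)

theorem mobius_neg_mobius (hp : ‖p‖ < 1) {z : ℂ} (hz : z ∈ ball (0 : ℂ) 1) :
    mobius (-p) (mobius p z) = z := by
  have hden := one_sub_conj_mul_ne_zero hp (mem_ball_zero_iff.1 hz).le
  have hden' : 1 - conj p * p ≠ 0 := one_sub_conj_mul_ne_zero hp hp.le
  have hnum : mobius p z - -p = z * (1 - conj p * p) / (1 - conj p * z) := by
    rw [mobius, eq_div_iff hden, sub_mul, div_mul_cancel₀ _ hden]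
    ring
  have hdenom : 1 - conj (-p) * mobius p z = (1 - conj p * p) / (1 - conj p * z) := by
    rw [mobius, eq_div_iff hden, sub_mul, mul_assoc, div_mul_cancel₀ _ hden, map_neg]
    ring
  rw [mobius, hnum, hdenom, div_div_div_cancel_right₀ hden, mul_div_cancel_right₀ _ hden']

theorem differentiableOn_mobius (hp : ‖p‖ < 1) : DifferentiableOn ℂ (mobius p) (ball 0 1) := by
  unfold mobius
  exact .div (by fun_prop) (by fun_prop) fun z hz =>
    one_sub_conj_mul_ne_zero hp (mem_ball_zero_iff.1 hz).le

end Mobius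

theorem exists_eq_mul_of_leftInvOn_of_map_zero {F G : ℂ → ℂ}
    (hF : DifferentiableOn ℂ F (ball 0 1)) (hG : DifferentiableOn ℂ G (ball 0 1))
    (hFm : Set.MapsTo F (ball 0 1) (ball 0 1)) (hGm : Set.MapsTo G (ball 0 1) (ball 0 1))
    (hGF : Set.LeftInvOn G F (ball 0 1)) (hF0 : F 0 = 0) :
    ∃ ζ : ℂ, ‖ζ‖ = 1 ∧ ∀ z ∈ ball (0 : ℂ) 1, F z = ζ * z := by
  have hG0 : G 0 = 0 := by simpa [hF0] using hGF (mem_ball_self one_pos)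
  have hhalf : (1 / 2 : ℂ) ∈ ball (0 : ℂ) 1 := by norm_num
  have hnorm : ‖F (1 / 2)‖ = ‖(1 / 2 : ℂ)‖ := by
    refine le_antisymm ?_ ?_
    · exact Complex.norm_le_norm_of_mapsTo_ball hF (hFm.mono_right ball_subset_closedBall) hF0
        (mem_ball_zero_iff.1 hhalf)
    · simpa only [hGF hhalf] using Complex.norm_le_norm_of_mapsTo_ball hG
        (hGm.mono_right ball_subset_closedBall) hG0 (mem_ball_zero_iff.1 (hFm hhalf))
  obtain ⟨ζ, hζ, hFζ⟩ := Complex.affine_of_mapsTo_ball_of_exists_norm_dslope_eq_div' (R₂ := 1) hF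
    (by simpa only [hF0] using hFm.mono_right ball_subset_closedBall)
    ⟨1 / 2, hhalf, by
      rw [dslope_of_ne _ (by norm_num), slope_def_field, hF0, sub_zero, sub_zero, norm_div, hnorm]
      norm_num⟩
  exact ⟨ζ, by simpa using hζ, fun z hz => by simpa [hF0, mul_comm] using hFζ hz⟩

theorem exists_eq_mul_mobius {φ φinv : ℂ → ℂ}
    (hφ : DifferentiableOn ℂ φ (ball 0 1)) (hφinv : DifferentiableOn ℂ φinv (ball 0 1))
    (hφm : Set.MapsTo φ (ball 0 1) (ball 0 1)) (hφinvm : Set.MapsTo φinv (ball 0 1) (ball 0 1))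
    (hinv : Set.InvOn φinv φ (ball 0 1) (ball 0 1)) :
    ∃ p ζ : ℂ, ‖p‖ < 1 ∧ ‖ζ‖ = 1 ∧ ∀ z ∈ ball (0 : ℂ) 1, φ z = ζ * mobius p z := by
  have hzero : (0 : ℂ) ∈ ball (0 : ℂ) 1 := mem_ball_self one_pos
  have hp : ‖φinv 0‖ < 1 := mem_ball_zero_iff.1 (hφinvm hzero)
  have hp' : ‖-φinv 0‖ < 1 := by rwa [norm_neg]
  obtain ⟨ζ, hζ, hrot⟩ := exists_eq_mul_of_leftInvOn_of_map_zero
    (F := φ ∘ mobius (-φinv 0)) (G := mobius (φinv 0) ∘ φinv)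
    (hφ.comp (differentiableOn_mobius hp') (mapsTo_mobius hp'))
    ((differentiableOn_mobius hp).comp hφinv hφinvm)
    (hφm.comp (mapsTo_mobius hp')) ((mapsTo_mobius hp).comp hφinvm)
    (fun z hz => by
      simpa [hinv.1 (mapsTo_mobius hp' hz)] using mobius_neg_mobius hp' hz)
    (by simpa [mobius] using hinv.2 hzero)
  refine ⟨φinv 0, ζ, hp, hζ, fun z hz => ?_⟩
  simpa [mobius_neg_mobius hp hz] using hrot _ (mapsTo_mobius hp hz)

/-- An invertible element of the disc algebra: `v` is holomorphic on the open disc, continuous on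
the closed disc and has no zero there. -/
structure IsDiscAlgebraUnit (v : ℂ → ℂ) : Prop where
  differentiableOn : DifferentiableOn ℂ v (ball 0 1)
  continuousOn : ContinuousOn v (closedBall 0 1)
  ne_zero : ∀ z ∈ closedBall (0 : ℂ) 1, v z ≠ 0

namespace IsDiscAlgebraUnit

variable {v w : ℂ → ℂ}

theorem mul (hv : IsDiscAlgebraUnit v) (hw : IsDiscAlgebraUnit w) :
    IsDiscAlgebraUnit fun z => v z * w z where
  differentiableOn := hv.differentiableOn.mul hw.differentiableOn
  continuousOn := hv.continuousOn.mul hw.continuousOn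
  ne_zero z hz := mul_ne_zero (hv.ne_zero z hz) (hw.ne_zero z hz)

theorem inv (hv : IsDiscAlgebraUnit v) : IsDiscAlgebraUnit fun z => (v z)⁻¹ where
  differentiableOn := hv.differentiableOn.inv fun z hz => hv.ne_zero z (ball_subset_closedBall hz)
  continuousOn := hv.continuousOn.inv₀ hv.ne_zero
  ne_zero z hz := inv_ne_zero (hv.ne_zero z hz)

theorem div (hv : IsDiscAlgebraUnit v) (hw : IsDiscAlgebraUnit w) :
    IsDiscAlgebraUnit fun z => v z / w z := by
  simpa only [div_eq_mul_inv] using hv.mul hw.inv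

theorem pow (hv : IsDiscAlgebraUnit v) (n : ℕ) : IsDiscAlgebraUnit fun z => v z ^ n where
  differentiableOn := hv.differentiableOn.pow n
  continuousOn := hv.continuousOn.pow n
  ne_zero z hz := pow_ne_zero n (hv.ne_zero z hz)

theorem const {c : ℂ} (hc : c ≠ 0) : IsDiscAlgebraUnit fun _ => c where
  differentiableOn := differentiableOn_const c
  continuousOn := continuousOn_const
  ne_zero _ _ := hc

theorem exists_norm_le (hv : IsDiscAlgebraUnit v) :
    ∃ B, ∀ z ∈ ball (0 : ℂ) 1, ‖v z‖ ≤ B := by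
  obtain ⟨B, hB⟩ := (isCompact_closedBall (0 : ℂ) 1).exists_bound_of_continuousOn hv.continuousOn
  exact ⟨B, fun z hz => hB z (ball_subset_closedBall hz)⟩

theorem of_forall_le_norm (hd : DifferentiableOn ℂ v (ball 0 1))
    (hc : ContinuousOn v (closedBall 0 1)) {ε : ℝ} (hε : 0 < ε)
    (hle : ∀ z ∈ ball (0 : ℂ) 1, ε ≤ ‖v z‖) : IsDiscAlgebraUnit v where
  differentiableOn := hd
  continuousOn := hc
  ne_zero z hz := by
    rw [← closure_ball (0 : ℂ) one_ne_zero] at hc hz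
    exact norm_pos_iff.1 (hε.trans_le
      (le_on_closure hle continuousOn_const hc.norm hz))

end IsDiscAlgebraUnit

/-- The weight `k` for which `C_{k,φ}` is unitary when `φ = ζ * mobius p`. -/
noncomputable def mobiusWeight (p z : ℂ) : ℂ := √(1 - ‖p‖ ^ 2) / (1 - conj p * z)

section MobiusWeight

variable {p : ℂ}

theorem isDiscAlgebraUnit_mobiusWeight (hp : ‖p‖ < 1) : IsDiscAlgebraUnit (mobiusWeight p) := by
  have hsqrt : ((√(1 - ‖p‖ ^ 2) : ℝ) : ℂ) ≠ 0 := by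
    have hpos : 0 < 1 - ‖p‖ ^ 2 := sub_pos.2 (pow_lt_one₀ (norm_nonneg _) hp two_ne_zero)
    exact mod_cast (Real.sqrt_pos.2 hpos).ne'
  refine (IsDiscAlgebraUnit.const hsqrt).div ⟨by fun_prop, by fun_prop, fun z hz => ?_⟩
  exact one_sub_conj_mul_ne_zero hp (mem_closedBall_zero_iff.1 hz)

theorem sqrt_mul_sqrt_one_sub_sq_norm (hp : ‖p‖ < 1) :
    ((√(1 - ‖p‖ ^ 2) : ℝ) : ℂ) * (√(1 - ‖p‖ ^ 2) : ℝ) = 1 - conj p * p := by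
  have hnonneg : 0 ≤ 1 - ‖p‖ ^ 2 := sub_nonneg.2 (pow_le_one₀ (norm_nonneg _) hp.le)
  rw [← Complex.ofReal_mul, Real.mul_self_sqrt hnonneg, Complex.conj_mul']
  push_cast
  rfl

theorem mobiusWeight_kernel_identity (hp : ‖p‖ < 1) {ζ : ℂ} (hζ : ‖ζ‖ = 1) {z w : ℂ}
    (hz : z ∈ ball (0 : ℂ) 1) (hw : w ∈ ball (0 : ℂ) 1) :
    mobiusWeight p z * conj (mobiusWeight p w) * (1 - conj w * z) =
      1 - conj (ζ * mobius p w) * (ζ * mobius p z) := by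
  have hdz := one_sub_conj_mul_ne_zero hp (mem_ball_zero_iff.1 hz).le
  have hdw : 1 - p * conj w ≠ 0 := by
    simpa using (map_ne_zero (starRingEnd ℂ)).2
      (one_sub_conj_mul_ne_zero hp (mem_ball_zero_iff.1 hw).le)
  have hζζ : conj ζ * ζ = 1 := by rw [Complex.conj_mul', hζ]; simp
  simp only [mobius, mobiusWeight, map_div₀, map_sub, map_mul, Complex.conj_conj, map_one,
    Complex.conj_ofReal]
  field_simp
  linear_combination (1 - conj w * z) * sqrt_mul_sqrt_one_sub_sq_norm hp
    + (conj w - conj p) * (z - p) * hζζ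

end MobiusWeight

/-- A hyperbolic automorphism `φ` of the disc with attracting fixed point `a`, repelling fixed point
`b` and multiplier `ρ = φ'(b)`, together with the weight `k` that makes `C_{k,φ}` unitary. The
Möbius form of `φ` enters only through the factorisations of `φ - a` and `φ - b`. -/
structure IsHyperbolicSymbol (φ k : ℂ → ℂ) (a b : ℂ) (ρ : ℝ) : Prop where
  norm_attracting : ‖a‖ = 1
  norm_repelling : ‖b‖ = 1
  attracting_ne_repelling : a ≠ b
  one_lt : 1 < ρ
  differentiableOn : DifferentiableOn ℂ φ (ball 0 1)
  weight_unit : IsDiscAlgebraUnit k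
  unitary_weight : IsUnitaryWeight k φ
  weight_repelling : k b = ρ * k a
  norm_weight_attracting : ‖k a‖ = (√ρ)⁻¹
  sub_attracting : ∀ z ∈ ball (0 : ℂ) 1, φ z - a = k z / k b * (z - a)
  sub_repelling : ∀ z ∈ ball (0 : ℂ) 1, φ z - b = k z / k a * (z - b)

section FixedPoints

variable {p ζ a b : ℂ} {ρ : ℝ}

theorem mul_one_sub_of_mobius_eq {z : ℂ} (hp : ‖p‖ < 1) (hz : ‖z‖ ≤ 1)
    (hfix : ζ * mobius p z = z) : z * (1 - conj p * z) = ζ * (z - p) := by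
  have hden := one_sub_conj_mul_ne_zero hp hz
  rw [mobius, ← mul_div_assoc, div_eq_iff hden] at hfix
  exact hfix.symm

theorem mul_one_sub_sq_eq_of_fixedPoints (hab : a ≠ b)
    (ha : a * (1 - conj p * a) = ζ * (a - p)) (hb : b * (1 - conj p * b) = ζ * (b - p)) :
    ζ * (1 - conj p * p) = (1 - conj p * a) * (1 - conj p * b) := by
  refine mul_left_cancel₀ (sub_ne_zero.2 hab) ?_
  linear_combination (-(1 - conj p * b)) * ha + (1 - conj p * a) * hb

theorem mobius_sub_fixedPoint (hp : ‖p‖ < 1) (ha : ‖a‖ ≤ 1) (hb : ‖b‖ ≤ 1) (hab : a ≠ b)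
    (hfixa : ζ * mobius p a = a) (hfixb : ζ * mobius p b = b) {z : ℂ} (hz : z ∈ ball (0 : ℂ) 1) :
    ζ * mobius p z - a = mobiusWeight p z / mobiusWeight p b * (z - a) := by
  have ha' := mul_one_sub_of_mobius_eq hp ha hfixa
  have hb' := mul_one_sub_of_mobius_eq hp hb hfixb
  have hE := mul_one_sub_sq_eq_of_fixedPoints hab ha' hb'
  have hda := one_sub_conj_mul_ne_zero hp ha
  have hdz := one_sub_conj_mul_ne_zero hp (mem_ball_zero_iff.1 hz).le
  have hsqrt : ((√(1 - ‖p‖ ^ 2) : ℝ) : ℂ) ≠ 0 := fun h =>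
    (isDiscAlgebraUnit_mobiusWeight hp).ne_zero z (ball_subset_closedBall hz) (by
      rw [mobiusWeight, h, zero_div])
  rw [mobius, mobiusWeight, mobiusWeight, div_div_div_cancel_left' _ _ hsqrt, ← mul_div_assoc,
    div_mul_eq_mul_div, div_sub' hdz, div_left_inj' hdz]
  refine mul_left_cancel₀ hda ?_
  linear_combination (z - a) * hE - (1 - conj p * z) * ha'

theorem eq_ofReal_mul_of_deriv_inv (hp : ‖p‖ < 1) (ha : ‖a‖ ≤ 1) (hb : ‖b‖ ≤ 1) (hab : a ≠ b)
    (hfixa : ζ * mobius p a = a) (hfixb : ζ * mobius p b = b) (hρ : ρ ≠ 0)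
    (hderiv : HasDerivWithinAt (fun z => ζ * mobius p z) (ρ : ℂ)⁻¹ (closedBall 0 1) a) :
    1 - conj p * a = ρ * (1 - conj p * b) := by
  have hda := one_sub_conj_mul_ne_zero hp ha
  have hE := mul_one_sub_sq_eq_of_fixedPoints hab (mul_one_sub_of_mobius_eq hp ha hfixa)
    (mul_one_sub_of_mobius_eq hp hb hfixb)
  have hmobius : HasDerivAt (fun z => ζ * mobius p z)
      (ζ * ((1 * (1 - conj p * a) - (a - p) * (-(conj p * 1))) / (1 - conj p * a) ^ 2)) a :=
    (((hasDerivAt_id a).sub_const p).div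
      (((hasDerivAt_id a).const_mul (conj p)).const_sub 1) hda).const_mul ζ
  have hunique : UniqueDiffWithinAt ℂ (closedBall (0 : ℂ) 1) a :=
    (uniqueDiffWithinAt_convex (convex_closedBall (0 : ℂ) 1)
      (by rw [interior_closedBall _ one_ne_zero]; exact ⟨0, by simp⟩)
      (subset_closure (mem_closedBall_zero_iff.2 ha))).mono_field
  have hderiv_eq := hunique.eq_deriv _ hderiv hmobius.hasDerivWithinAt
  have hρ' : (ρ : ℂ) ≠ 0 := mod_cast hρ
  field_simp at hderiv_eq
  refine mul_left_cancel₀ hda ?_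
  linear_combination hderiv_eq + ρ * hE

theorem norm_mobiusWeight_of_fixedPoints (hp : ‖p‖ < 1) (hζ : ‖ζ‖ = 1) (ha : ‖a‖ ≤ 1)
    (hb : ‖b‖ ≤ 1) (hab : a ≠ b) (hfixa : ζ * mobius p a = a) (hfixb : ζ * mobius p b = b) :
    ‖mobiusWeight p a‖ * ‖mobiusWeight p b‖ = 1 := by
  have hE := mul_one_sub_sq_eq_of_fixedPoints hab (mul_one_sub_of_mobius_eq hp ha hfixa)
    (mul_one_sub_of_mobius_eq hp hb hfixb)
  have hne : (1 - conj p * a) * (1 - conj p * b) ≠ 0 :=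
    mul_ne_zero (one_sub_conj_mul_ne_zero hp ha) (one_sub_conj_mul_ne_zero hp hb)
  have hζ0 : ζ ≠ 0 := norm_ne_zero_iff.1 (by rw [hζ]; exact one_ne_zero)
  have hprod : mobiusWeight p a * mobiusWeight p b = ζ⁻¹ := by
    rw [mobiusWeight, mobiusWeight, div_mul_div_comm, sqrt_mul_sqrt_one_sub_sq_norm hp,
      div_eq_iff hne, ← hE, inv_mul_cancel_left₀ hζ0]
  rw [← norm_mul, hprod, norm_inv, hζ, inv_one]

theorem mobiusWeight_eq_ofReal_mul (hρ : ρ ≠ 0)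
    (hratio : 1 - conj p * a = ρ * (1 - conj p * b)) :
    mobiusWeight p b = ρ * mobiusWeight p a := by
  have hρ' : (ρ : ℂ) ≠ 0 := mod_cast hρ
  rw [mobiusWeight, mobiusWeight, hratio, ← mul_div_assoc, mul_div_mul_left _ _ hρ']

theorem eq_inv_sqrt_of_mul_mul_eq_one {x : ℝ} (hx : 0 ≤ x) (hρ : 0 < ρ) (h : x * (ρ * x) = 1) :
    x = (√ρ)⁻¹ := by
  rw [← Real.sqrt_inv, eq_comm, Real.sqrt_eq_iff_mul_self_eq (inv_nonneg.2 hρ.le) hx]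
  exact inv_eq_of_mul_eq_one_right (by linear_combination h)

theorem eqOn_closedBall_mobius {φ : ℂ → ℂ} (hφ : ContinuousOn φ (closedBall 0 1)) (hp : ‖p‖ < 1)
    (h : Set.EqOn φ (fun z => ζ * mobius p z) (ball 0 1)) :
    Set.EqOn φ (fun z => ζ * mobius p z) (closedBall 0 1) :=
  h.of_subset_closure hφ (continuousOn_const.mul (.div (by fun_prop) (by fun_prop) fun _ hz =>
      one_sub_conj_mul_ne_zero hp (mem_closedBall_zero_iff.1 hz)))
    ball_subset_closedBall (closure_ball (0 : ℂ) one_ne_zero).ge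

end FixedPoints

theorem isHyperbolicSymbol_of_automorphism {φ φinv : ℂ → ℂ} {a b : ℂ} {ρ : ℝ}
    (hφc : ContinuousOn φ (closedBall 0 1)) (hφ : DifferentiableOn ℂ φ (ball 0 1))
    (hφinv : DifferentiableOn ℂ φinv (ball 0 1)) (hφm : Set.MapsTo φ (ball 0 1) (ball 0 1))
    (hφinvm : Set.MapsTo φinv (ball 0 1) (ball 0 1))
    (hinv : Set.InvOn φinv φ (ball 0 1) (ball 0 1))
    (ha : ‖a‖ = 1) (hb : ‖b‖ = 1) (hab : a ≠ b) (hfixa : φ a = a) (hfixb : φ b = b)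
    (hρ : 1 < ρ) (hderiv : deriv φ a = (ρ : ℂ)⁻¹) :
    ∃ k, IsHyperbolicSymbol φ k a b ρ := by
  obtain ⟨p, ζ, hp, hζ, hform⟩ := exists_eq_mul_mobius hφ hφinv hφm hφinvm hinv
  have hform' := eqOn_closedBall_mobius hφc hp hform
  have hac : a ∈ closedBall (0 : ℂ) 1 := mem_closedBall_zero_iff.2 ha.le
  have hfixa' : ζ * mobius p a = a := (hform' hac).symm.trans hfixa
  have hfixb' : ζ * mobius p b = b :=
    (hform' (mem_closedBall_zero_iff.2 hb.le)).symm.trans hfixb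
  have hρ0 : 0 < ρ := one_pos.trans hρ
  have hρ0' : (ρ : ℂ)⁻¹ ≠ 0 := inv_ne_zero (mod_cast hρ0.ne')
  have hderiv' : HasDerivAt φ (ρ : ℂ)⁻¹ a := hderiv ▸
    (differentiableAt_of_deriv_ne_zero (by rwa [hderiv])).hasDerivAt
  have hratio : 1 - conj p * a = ρ * (1 - conj p * b) :=
    eq_ofReal_mul_of_deriv_inv hp ha.le hb.le hab hfixa' hfixb' hρ0.ne'
      (hderiv'.hasDerivWithinAt.congr (fun z hz => (hform' hz).symm) (hform' hac).symm)
  have hunit := isDiscAlgebraUnit_mobiusWeight hp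
  have hkb := mobiusWeight_eq_ofReal_mul hρ0.ne' hratio
  refine ⟨mobiusWeight p,
    { norm_attracting := ha
      norm_repelling := hb
      attracting_ne_repelling := hab
      one_lt := hρ
      differentiableOn := hφ
      weight_unit := hunit
      unitary_weight := ⟨hφm, fun w hw => ⟨φinv w, hφinvm hw, hinv.2 hw⟩,
        fun z hz => hunit.ne_zero z (ball_subset_closedBall hz), fun z hz w hw => by
          rw [hform z hz, hform w hw, mobiusWeight_kernel_identity hp hζ hz hw]⟩
      weight_repelling := hkb
      norm_weight_attracting := ?_
      sub_attracting := fun z hz => by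
        rw [hform z hz, mobius_sub_fixedPoint hp ha.le hb.le hab hfixa' hfixb' hz]
      sub_repelling := fun z hz => by
        rw [hform z hz, mobius_sub_fixedPoint hp hb.le ha.le hab.symm hfixb' hfixa' hz] }⟩
  have hnorm := norm_mobiusWeight_of_fixedPoints hp hζ ha.le hb.le hab hfixa' hfixb'
  rw [hkb, norm_mul, Complex.norm_of_nonneg hρ0.le] at hnorm
  exact eq_inv_sqrt_of_mul_mul_eq_one (norm_nonneg _) hρ0 hnorm

/-! ### Products along orbits -/

theorem sub_ne_zero_of_mem_ball_of_norm_eq_one {a z : ℂ} (ha : ‖a‖ = 1) (hz : z ∈ ball (0 : ℂ) 1) :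
    z - a ≠ 0 :=
  sub_ne_zero.2 fun h => (mem_ball_zero_iff.1 hz).ne (h ▸ ha)

theorem card_filter_pow_mul_mem_Ioo_le {ρ R : ℝ} (hρ : 1 < ρ) (hR : 0 < R) {N : ℕ}
    (hN : R ^ 2 ≤ ρ ^ N) (t : ℝ) (n : ℕ) :
    ((Finset.range n).filter fun j => ρ ^ j * t ∈ Set.Ioo R⁻¹ R).card ≤ N := by
  set S := (Finset.range n).filter fun j => ρ ^ j * t ∈ Set.Ioo R⁻¹ R
  rcases S.eq_empty_or_nonempty with hS | hS
  · simp [hS]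
  suffices hsub : S ⊆ Finset.Ico (S.min' hS) (S.min' hS + N) by
    simpa using Finset.card_le_card hsub
  intro j hj
  obtain ⟨d, hd⟩ := Nat.exists_eq_add_of_le (S.min'_le j hj)
  have hmin : R⁻¹ < ρ ^ S.min' hS * t := (Finset.mem_filter.1 (S.min'_mem hS)).2.1
  have hjR : ρ ^ d * (ρ ^ S.min' hS * t) < R := by
    have hj' := (Finset.mem_filter.1 hj).2.2
    rw [hd, pow_add] at hj'
    linarith
  have hpow : ρ ^ d < ρ ^ N := by
    refine lt_of_lt_of_le ?_ hN
    have hlt : ρ ^ d * R⁻¹ < R := (mul_lt_mul_of_pos_left hmin (by positivity)).trans hjR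
    rwa [← div_eq_mul_inv, div_lt_iff₀ hR, ← pow_two] at hlt
  have hdN := (pow_lt_pow_iff_right₀ hρ).1 hpow
  exact Finset.mem_Ico.2 ⟨S.min'_le j hj, by omega⟩

theorem exists_forall_norm_le_of_ratio_notMem_Ioo {v : ℂ → ℂ}
    (hv : ContinuousOn v (closedBall 0 1)) {a b : ℂ} (ha : ‖a‖ = 1) (hb : ‖b‖ = 1) {M : ℝ}
    (hMa : ‖v a‖ < M) (hMb : ‖v b‖ < M) :
    ∃ R > 0, ∀ w ∈ ball (0 : ℂ) 1, ‖(w - b) / (w - a)‖ ∉ Set.Ioo R⁻¹ R → ‖v w‖ ≤ M := by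
  have exists_radius (c : ℂ) (hc : ‖c‖ = 1) (hMc : ‖v c‖ < M) :
      ∃ δ > 0, ∀ w ∈ ball (0 : ℂ) 1, ‖w - c‖ < δ → ‖v w‖ ≤ M := by
    have hev := (hv.norm c (mem_closedBall_zero_iff.2 hc.le)).eventually (gt_mem_nhds hMc)
    obtain ⟨δ, hδ, hball⟩ := nhdsWithin_basis_ball.eventually_iff.1 hev
    exact ⟨δ, hδ, fun w hw hwc =>
      (hball ⟨mem_ball_iff_norm.2 hwc, ball_subset_closedBall hw⟩).le⟩
  have norm_sub_lt_two (w : ℂ) (hw : w ∈ ball (0 : ℂ) 1) (c : ℂ) (hc : ‖c‖ = 1) :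
      ‖w - c‖ < 2 := by
    linarith [norm_sub_le w c, mem_ball_zero_iff.1 hw]
  obtain ⟨δa, hδa, hva⟩ := exists_radius a ha hMa
  obtain ⟨δb, hδb, hvb⟩ := exists_radius b hb hMb
  refine ⟨max (2 / δa) (2 / δb), by positivity, fun w hw hratio => ?_⟩
  have hwa : 0 < ‖w - a‖ := norm_pos_iff.2 (sub_ne_zero_of_mem_ball_of_norm_eq_one ha hw)
  rw [Set.mem_Ioo, not_and_or, not_lt, not_lt, norm_div, div_le_iff₀ hwa, le_div_iff₀ hwa] at hratio
  rcases hratio with hnear_b | hnear_a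
  · refine hvb w hw (hnear_b.trans_lt ?_)
    rw [inv_mul_lt_iff₀ (by positivity)]
    refine (norm_sub_lt_two w hw a ha).trans_le ?_
    rw [← div_le_iff₀ hδb]
    exact le_max_right _ _
  · refine hva w hw ?_
    have hlt : 2 / δa * ‖w - a‖ < 2 :=
      (mul_le_mul_of_nonneg_right (le_max_left _ _) hwa.le).trans_lt
        (hnear_a.trans_lt (norm_sub_lt_two w hw b hb))
    rw [div_mul_eq_mul_div, div_lt_iff₀ hδa] at hlt
    linarith

namespace IsHyperbolicSymbol

variable {φ k : ℂ → ℂ} {a b : ℂ} {ρ : ℝ}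

theorem weight_attracting_ne_zero (H : IsHyperbolicSymbol φ k a b ρ) : k a ≠ 0 :=
  H.weight_unit.ne_zero a (mem_closedBall_zero_iff.2 H.norm_attracting.le)

theorem weight_repelling_ne_zero (H : IsHyperbolicSymbol φ k a b ρ) : k b ≠ 0 :=
  H.weight_unit.ne_zero b (mem_closedBall_zero_iff.2 H.norm_repelling.le)

theorem iterate_mem_ball (H : IsHyperbolicSymbol φ k a b ρ) (n : ℕ) {z : ℂ}
    (hz : z ∈ ball (0 : ℂ) 1) : φ^[n] z ∈ ball (0 : ℂ) 1 :=
  H.unitary_weight.mapsTo.iterate n hz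

theorem ratio_map (H : IsHyperbolicSymbol φ k a b ρ) {z : ℂ} (hz : z ∈ ball (0 : ℂ) 1) :
    (φ z - b) / (φ z - a) = ρ * ((z - b) / (z - a)) := by
  have hka := H.weight_attracting_ne_zero
  have hkz := H.unitary_weight.ne_zero z hz
  have hρ : (ρ : ℂ) ≠ 0 := mod_cast (one_pos.trans H.one_lt).ne'
  rw [H.sub_attracting z hz, H.sub_repelling z hz, H.weight_repelling]
  field_simp

theorem ratio_iterate (H : IsHyperbolicSymbol φ k a b ρ) {z : ℂ} (hz : z ∈ ball (0 : ℂ) 1)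
    (n : ℕ) : (φ^[n] z - b) / (φ^[n] z - a) = (ρ : ℂ) ^ n * ((z - b) / (z - a)) := by
  induction n with
  | zero => simp
  | succ n ih =>
    rw [Function.iterate_succ_apply', H.ratio_map (H.iterate_mem_ball n hz), ih]
    ring

/-- Since `|(z - b) / (z - a)|` is multiplied by `ρ` at each step, every orbit has at most `N`
points outside given neighbourhoods of `a` and `b`, with `N` independent of the orbit. -/
theorem exists_prod_norm_iterate_le (H : IsHyperbolicSymbol φ k a b ρ) {v : ℂ → ℂ}
    (hv : ContinuousOn v (closedBall 0 1)) {M : ℝ} (hMa : ‖v a‖ < M) (hMb : ‖v b‖ < M) :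
    ∃ C : ℝ, ∀ n : ℕ, ∀ z ∈ ball (0 : ℂ) 1,
      ∏ j ∈ Finset.range n, ‖v (φ^[j] z)‖ ≤ C * M ^ n := by
  have hM : 0 < M := (norm_nonneg _).trans_lt hMa
  obtain ⟨B, hB⟩ := (isCompact_closedBall (0 : ℂ) 1).exists_bound_of_continuousOn hv
  obtain ⟨R, hR, hnear⟩ :=
    exists_forall_norm_le_of_ratio_notMem_Ioo hv H.norm_attracting H.norm_repelling hMa hMb
  obtain ⟨N, hN⟩ := pow_unbounded_of_one_lt (R ^ 2) H.one_lt
  set Q := max (B / M) 1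
  refine ⟨Q ^ N, fun n z hz => ?_⟩
  set t := ‖(z - b) / (z - a)‖
  have factor_le (j : ℕ) :
      ‖v (φ^[j] z)‖ ≤ M * (if ρ ^ j * t ∈ Set.Ioo R⁻¹ R then Q else 1) := by
    have hball := H.iterate_mem_ball j hz
    split_ifs with hj
    · refine (hB _ (ball_subset_closedBall hball)).trans ?_
      exact (div_le_iff₀' hM).1 (le_max_left _ _)
    · rw [mul_one]
      refine hnear _ hball ?_
      rwa [H.ratio_iterate hz, norm_mul, norm_pow,
        Complex.norm_of_nonneg (one_pos.trans H.one_lt).le]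
  calc ∏ j ∈ Finset.range n, ‖v (φ^[j] z)‖
      ≤ ∏ j ∈ Finset.range n, M * (if ρ ^ j * t ∈ Set.Ioo R⁻¹ R then Q else 1) :=
        Finset.prod_le_prod (fun _ _ => norm_nonneg _) fun j _ => factor_le j
    _ = Q ^ ((Finset.range n).filter fun j => ρ ^ j * t ∈ Set.Ioo R⁻¹ R).card * M ^ n := by
        rw [Finset.prod_mul_distrib, Finset.prod_const, Finset.card_range, ← Finset.prod_filter,
          Finset.prod_const, mul_comm]
    _ ≤ Q ^ N * M ^ n := by
        gcongr
        · exact le_max_right _ _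
        · exact card_filter_pow_mul_mem_Ioo_le H.one_lt hR hN.le t n

end IsHyperbolicSymbol

/-! ### Eigenfunctions of the composition operator -/

theorem re_mul_sub_mul_conj_sub {a b : ℂ} (ha : ‖a‖ = 1) (hb : ‖b‖ = 1) (z : ℂ) :
    ((a * conj b - 1) * (z - b) * conj (z - a)).re = ‖a - b‖ ^ 2 / 2 * (1 - ‖z‖ ^ 2) := by
  have hare : a.re * a.re + a.im * a.im = 1 := by
    rw [← Complex.normSq_apply, ← Complex.sq_norm, ha, one_pow]
  have hbre : b.re * b.re + b.im * b.im = 1 := by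
    rw [← Complex.normSq_apply, ← Complex.sq_norm, hb, one_pow]
  simp only [Complex.sq_norm, Complex.normSq_apply, Complex.sub_re, Complex.sub_im,
    Complex.mul_re, Complex.mul_im, Complex.conj_re, Complex.conj_im, Complex.one_re,
    Complex.one_im]
  linear_combination
    hare * ((z.re * z.re + z.im * z.im) / 2 - (b.re * z.re + b.im * z.im)
      + (b.re * b.re + b.im * b.im - 1 / 2))
    + hbre * ((z.re * z.re + z.im * z.im) / 2 - (a.re * z.re + a.im * z.im) + 1 / 2)

section TranslationCoord

variable {a b z : ℂ}

theorem re_mul_ratio_pos (ha : ‖a‖ = 1) (hb : ‖b‖ = 1) (hab : a ≠ b)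
    (hz : z ∈ ball (0 : ℂ) 1) : 0 < ((a * conj b - 1) * ((z - b) / (z - a))).re := by
  have hza : z - a ≠ 0 := sub_ne_zero_of_mem_ball_of_norm_eq_one ha hz
  have hab' : a - b ≠ 0 := sub_ne_zero.2 hab
  have hz' : 0 < 1 - ‖z‖ ^ 2 :=
    sub_pos.2 (pow_lt_one₀ (norm_nonneg z) (mem_ball_zero_iff.1 hz) two_ne_zero)
  have heq : (a * conj b - 1) * ((z - b) / (z - a)) =
      ((‖z - a‖ ^ 2)⁻¹ : ℝ) * ((a * conj b - 1) * (z - b) * conj (z - a)) := by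
    have hconj : conj (z - a) ≠ 0 := (map_ne_zero _).2 hza
    push_cast
    rw [← Complex.mul_conj']
    field_simp
  rw [heq, Complex.re_ofReal_mul, re_mul_sub_mul_conj_sub ha hb]
  positivity

/-- A coordinate on the disc in which a hyperbolic automorphism with fixed points `a` and `b` is a
translation. The factor `a * conj b - 1` turns the half-plane of values of `(z - b) / (z - a)` into
the right half-plane, where the principal branch of the logarithm is holomorphic. -/
noncomputable def translationCoord (a b z : ℂ) : ℂ :=
  Complex.log ((a * conj b - 1) * ((z - b) / (z - a)))

theorem hasDerivAt_translationCoord (ha : ‖a‖ = 1) (hb : ‖b‖ = 1) (hab : a ≠ b)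
    (hz : z ∈ ball (0 : ℂ) 1) :
    HasDerivAt (translationCoord a b) ((b - a) / ((z - a) * (z - b))) z := by
  have hza : z - a ≠ 0 := sub_ne_zero_of_mem_ball_of_norm_eq_one ha hz
  have hzb : z - b ≠ 0 := sub_ne_zero_of_mem_ball_of_norm_eq_one hb hz
  have hpos := re_mul_ratio_pos ha hb hab hz
  have hc : a * conj b - 1 ≠ 0 := fun h => by simp [h] at hpos
  convert! ((((hasDerivAt_id z).sub_const b).div ((hasDerivAt_id z).sub_const a) hza).const_mul
    (a * conj b - 1)).clog (Or.inl hpos) using 1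
  simp only [id, Pi.div_apply]
  field_simp
  ring

theorem abs_im_translationCoord_le (ha : ‖a‖ = 1) (hb : ‖b‖ = 1) (hab : a ≠ b)
    (hz : z ∈ ball (0 : ℂ) 1) : |(translationCoord a b z).im| ≤ Real.pi / 2 := by
  rw [translationCoord, Complex.log_im]
  exact Complex.abs_arg_le_pi_div_two_iff.2 (re_mul_ratio_pos ha hb hab hz).le

/-- A bounded holomorphic function on the disc, with bounded inverse, that a hyperbolic
automorphism with fixed points `a` and `b` multiplies by a constant of modulus `1`. -/
noncomputable def orbitCharacter (a b : ℂ) (s : ℝ) (z : ℂ) : ℂ :=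
  Complex.exp (s * Complex.I * translationCoord a b z)

theorem orbitCharacter_mul_orbitCharacter_neg (s : ℝ) (z : ℂ) :
    orbitCharacter a b s z * orbitCharacter a b (-s) z = 1 := by
  rw [orbitCharacter, orbitCharacter, ← Complex.exp_add, ← Complex.exp_zero]
  congr 1
  push_cast
  ring

theorem hasDerivAt_orbitCharacter (ha : ‖a‖ = 1) (hb : ‖b‖ = 1) (hab : a ≠ b) (s : ℝ)
    (hz : z ∈ ball (0 : ℂ) 1) :
    HasDerivAt (orbitCharacter a b s) (orbitCharacter a b s z *
      (s * Complex.I * ((b - a) / ((z - a) * (z - b))))) z :=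
  ((hasDerivAt_translationCoord ha hb hab hz).const_mul _).cexp

theorem differentiableOn_orbitCharacter (ha : ‖a‖ = 1) (hb : ‖b‖ = 1) (hab : a ≠ b) (s : ℝ) :
    DifferentiableOn ℂ (orbitCharacter a b s) (ball 0 1) := fun _ hz =>
  (hasDerivAt_orbitCharacter ha hb hab s hz).differentiableAt.differentiableWithinAt

theorem norm_orbitCharacter_le (ha : ‖a‖ = 1) (hb : ‖b‖ = 1) (hab : a ≠ b) (s : ℝ)
    (hz : z ∈ ball (0 : ℂ) 1) : ‖orbitCharacter a b s z‖ ≤ Real.exp (|s| * (Real.pi / 2)) := by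
  have hre : (s * Complex.I * translationCoord a b z).re = -(s * (translationCoord a b z).im) := by
    simp
  rw [orbitCharacter, Complex.norm_exp, hre]
  gcongr
  calc -(s * (translationCoord a b z).im) ≤ |s| * |(translationCoord a b z).im| := by
        rw [← abs_mul]
        exact neg_le_abs _
    _ ≤ |s| * (Real.pi / 2) := by
        gcongr
        exact abs_im_translationCoord_le ha hb hab hz

end TranslationCoord

namespace IsHyperbolicSymbol

variable {φ k : ℂ → ℂ} {a b z : ℂ} {ρ : ℝ}

theorem translationCoord_map (H : IsHyperbolicSymbol φ k a b ρ) (hz : z ∈ ball (0 : ℂ) 1) :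
    translationCoord a b (φ z) = translationCoord a b z + Real.log ρ := by
  have hpos := re_mul_ratio_pos H.norm_attracting H.norm_repelling H.attracting_ne_repelling hz
  have hne : (a * conj b - 1) * ((z - b) / (z - a)) ≠ 0 := fun h => by simp [h] at hpos
  rw [translationCoord, H.ratio_map hz, mul_left_comm,
    Complex.log_ofReal_mul (one_pos.trans H.one_lt) hne, add_comm, translationCoord]

theorem orbitCharacter_map (H : IsHyperbolicSymbol φ k a b ρ) (θ : ℝ) (hz : z ∈ ball (0 : ℂ) 1) :
    orbitCharacter a b (θ / Real.log ρ) (φ z) =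
      Complex.exp (θ * Complex.I) * orbitCharacter a b (θ / Real.log ρ) z := by
  have hlog : (Real.log ρ : ℂ) ≠ 0 := mod_cast (Real.log_pos H.one_lt).ne'
  rw [orbitCharacter, H.translationCoord_map hz, orbitCharacter, ← Complex.exp_add]
  congr 1
  push_cast
  field_simp
  ring

theorem iterate_ne_self (H : IsHyperbolicSymbol φ k a b ρ) (hz : z ∈ ball (0 : ℂ) 1) {n : ℕ}
    (hn : n ≠ 0) : φ^[n] z ≠ z := by
  intro hfix
  have hratio : (z - b) / (z - a) ≠ 0 :=
    div_ne_zero (sub_ne_zero_of_mem_ball_of_norm_eq_one H.norm_repelling hz)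
      (sub_ne_zero_of_mem_ball_of_norm_eq_one H.norm_attracting hz)
  have hpow := H.ratio_iterate hz n
  rw [hfix, eq_comm, mul_eq_right₀ hratio] at hpow
  exact (one_lt_pow₀ H.one_lt hn).ne' (mod_cast hpow)

theorem orbitCharacter_iterate (H : IsHyperbolicSymbol φ k a b ρ) (hz : z ∈ ball (0 : ℂ) 1)
    (n : ℕ) : orbitCharacter a b (2 * Real.pi / Real.log ρ) (φ^[n] z) =
      orbitCharacter a b (2 * Real.pi / Real.log ρ) z := by
  induction n with
  | zero => rfl
  | succ n ih =>
    rw [Function.iterate_succ_apply', H.orbitCharacter_map _ (H.iterate_mem_ball n hz), ih]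
    push_cast
    rw [Complex.exp_two_pi_mul_I, one_mul]

end IsHyperbolicSymbol

/-- The function `x` on the disc, restricted to the full orbit `{φⁿ(0) : n ∈ ℤ}`, is supported at
the point `0`. -/
structure IsSupportedAtZeroOnOrbit (φ : ℂ → ℂ) (x : H2) : Prop where
  apply_zero_ne_zero : x.toFun 0 ≠ 0
  apply_iterate_zero : ∀ n ≠ 0, x.toFun (φ^[n] 0) = 0
  apply_of_iterate_eq_zero : ∀ n ≠ 0, ∀ w ∈ ball (0 : ℂ) 1, φ^[n] w = 0 → x.toFun w = 0

theorem IsSupportedAtZeroOnOrbit.mul_operator {φ q : ℂ → ℂ} {x : H2} {Q : H2 →L[ℂ] H2}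
    (hx : IsSupportedAtZeroOnOrbit φ x) (hφ : Set.MapsTo φ (ball 0 1) (ball 0 1))
    (hQ : IsWeightedComp q id Q) (hq : q 0 ≠ 0) : IsSupportedAtZeroOnOrbit φ (Q x) where
  apply_zero_ne_zero := by
    rw [hQ x 0 (by simp)]
    exact mul_ne_zero hq hx.apply_zero_ne_zero
  apply_iterate_zero n hn := by
    rw [hQ x _ (hφ.iterate n (by simp)), id, hx.apply_iterate_zero n hn, mul_zero]
  apply_of_iterate_eq_zero n hn w hw hw0 := by
    rw [hQ x w hw, id, hx.apply_of_iterate_eq_zero n hn w hw hw0, mul_zero]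

theorem exists_toFun_eq_dslope_zero {h : ℂ → ℂ} {B : ℝ} (hh : DifferentiableOn ℂ h (ball 0 1))
    (hB : ∀ z ∈ ball (0 : ℂ) 1, ‖h z‖ ≤ B) :
    ∃ x : H2, ∀ z ∈ ball (0 : ℂ) 1, x.toFun z = dslope h 0 z := by
  have hmaps : Set.MapsTo h (ball 0 1) (closedBall (h 0) (B + B)) := fun z hz =>
    mem_closedBall_iff_norm.2 ((norm_sub_le _ _).trans (add_le_add (hB z hz) (hB 0 (by simp))))
  obtain ⟨one, hone⟩ := H2.exists_toFun_eq_one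
  obtain ⟨M, hM, -⟩ := IsWeightedComp.exists_mul_operator
    ((Complex.differentiableOn_dslope (ball_mem_nhds 0 one_pos)).2 hh)
    fun z hz => Complex.norm_dslope_le_div_of_mapsTo_ball hh hmaps hz
  exact ⟨M one, fun z hz => by rw [hM one z hz, id, hone z hz, mul_one]⟩

-- The difference quotient at `0` of a `φ`-invariant function with nonzero derivative there works.
theorem IsHyperbolicSymbol.exists_isSupportedAtZeroOnOrbit {φ k : ℂ → ℂ} {a b : ℂ} {ρ : ℝ}
    (H : IsHyperbolicSymbol φ k a b ρ) : ∃ x : H2, IsSupportedAtZeroOnOrbit φ x := by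
  set h := orbitCharacter a b (2 * Real.pi / Real.log ρ)
  have ha := H.norm_attracting
  have hb := H.norm_repelling
  have hab := H.attracting_ne_repelling
  have h0 : (0 : ℂ) ∈ ball (0 : ℂ) 1 := mem_ball_self one_pos
  obtain ⟨x, hx⟩ := exists_toFun_eq_dslope_zero (h := h)
    (differentiableOn_orbitCharacter ha hb hab _) fun z hz => norm_orbitCharacter_le ha hb hab _ hz
  have vanishes {z : ℂ} (hz : z ∈ ball (0 : ℂ) 1) (hz0 : z ≠ 0) (heq : h z = h 0) :
      x.toFun z = 0 := by
    rw [hx z hz, dslope_of_ne _ hz0, slope_def_field, heq, sub_self, zero_div]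
  refine ⟨x, ?_, fun n hn => ?_, fun n hn w hw hw0 => ?_⟩
  · have ha0 : a ≠ 0 := norm_ne_zero_iff.1 (ha ▸ one_ne_zero)
    have hb0 : b ≠ 0 := norm_ne_zero_iff.1 (hb ▸ one_ne_zero)
    have hlog : (Real.log ρ : ℂ) ≠ 0 := mod_cast (Real.log_pos H.one_lt).ne'
    rw [hx 0 h0, dslope_same, (hasDerivAt_orbitCharacter ha hb hab _ h0).deriv]
    simp [orbitCharacter, Complex.exp_ne_zero, Real.pi_ne_zero, ha0, hb0, sub_eq_zero, hab.symm,
      hlog]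
  · exact vanishes (H.iterate_mem_ball n h0) (H.iterate_ne_self h0 hn)
      (H.orbitCharacter_iterate h0 n)
  · refine vanishes hw (fun hw' => H.iterate_ne_self h0 hn (hw' ▸ hw0)) ?_
    rw [← hw0]
    exact (H.orbitCharacter_iterate hw n).symm

/-! ### The spectrum and the growth of powers -/

section Spectrum

open Asymptotics

theorem isLittleO_pow_of_norm_le {𝕜 A : Type*} [NormedField 𝕜] [SeminormedAddCommGroup A]
    {f : ℕ → A} {C M : ℝ} {μ : 𝕜} (hM : 0 ≤ M) (hμ : M < ‖μ‖) (hf : ∀ n, ‖f n‖ ≤ C * M ^ n) :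
    f =o[atTop] fun n => μ ^ n := by
  have hbig : f =O[atTop] fun n => M ^ n :=
    IsBigO.of_bound C (Eventually.of_forall fun n => by
      rw [Real.norm_of_nonneg (pow_nonneg hM n)]
      exact hf n)
  refine (hbig.trans_isLittleO (isLittleO_pow_pow_of_lt_left hM hμ)).trans_isBigO ?_
  simp_rw [← norm_pow]
  exact isBigO_norm_left.2 (isBigO_refl (fun n => μ ^ n) atTop)

theorem not_isLittleO_pow_self {𝕜 : Type*} [NormedField 𝕜] {μ : 𝕜} (hμ : μ ≠ 0) :
    ¬ (fun n : ℕ => μ ^ n) =o[atTop] fun n => μ ^ n :=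
  isLittleO_irrefl (Frequently.of_forall fun n => pow_ne_zero n hμ)

theorem notMem_spectrum_of_isLittleO_pow {𝕜 A : Type*} [NormedField 𝕜] [NormedRing A]
    [NormedAlgebra 𝕜 A] [CompleteSpace A] {T : A} {μ : 𝕜} (hμ : μ ≠ 0)
    (hT : (fun n => T ^ n) =o[atTop] fun n => μ ^ n) : μ ∉ spectrum 𝕜 T := fun hmem => by
  refine not_isLittleO_pow_self hμ (IsBigO.trans_isLittleO ?_ hT)
  refine IsBigO.of_bound ‖(1 : A)‖ (Eventually.of_forall fun n => ?_)
  rw [mul_comm]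
  exact spectrum.norm_le_norm_mul_of_mem (spectrum.pow_mem_pow T n hmem)

theorem notMem_spectrum_of_isLittleO_inv_pow {𝕜 A : Type*} [NormedField 𝕜] [NormedRing A]
    [NormedAlgebra 𝕜 A] [CompleteSpace A] {τ : Aˣ} {μ : 𝕜} (hμ : μ ≠ 0)
    (hτ : (fun n => (↑τ⁻¹ : A) ^ n) =o[atTop] fun n => μ⁻¹ ^ n) : μ ∉ spectrum 𝕜 (τ : A) :=
  fun hmem => notMem_spectrum_of_isLittleO_pow (inv_ne_zero hμ) hτ
    (by simpa using! (spectrum.inv_mem_iff (r := Units.mk0 μ hμ)).1 hmem)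

variable {𝕜 E : Type*} [NontriviallyNormedField 𝕜] [NormedAddCommGroup E] [NormedSpace 𝕜 E]
  {μ : 𝕜}

theorem map_eq_zero_of_isLittleO_pow {T : E →L[𝕜] E} {δ : StrongDual 𝕜 E} {x y : E}
    (hμ : μ ≠ 0) (hxy : μ • y - T y = x) (hx : ∀ n, δ ((T ^ n) x) = 0)
    (hy : (fun n => δ ((T ^ n) y)) =o[atTop] fun n => μ ^ n) : δ y = 0 := by
  have hgeom (n : ℕ) : δ ((T ^ n) y) = δ y * μ ^ n := by
    induction n with
    | zero => simp
    | succ n ih =>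
      have hTy : T y = μ • y - x := by rw [← hxy, sub_sub_cancel]
      rw [pow_succ, mul_apply_eq_comp, hTy, map_sub, map_sub, hx, sub_zero, map_smul, map_smul, ih,
        smul_eq_mul, pow_succ']
      ring
  by_contra hδ
  simp_rw [hgeom] at hy
  exact not_isLittleO_pow_self hμ ((isLittleO_const_mul_left_iff hδ).1 hy)

/-- If `μ` were in the resolvent set, the sequence `δ (τⁿ (μ - τ)⁻¹ x)` would be geometric of ratio
`μ` on either side of `n = 0`, with a nonzero jump; the growth conditions make both halves vanish.
-/
theorem mem_spectrum_of_isLittleO_pow (hμ : μ ≠ 0) {τ : (E →L[𝕜] E)ˣ} {δ : StrongDual 𝕜 E}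
    {x : E} (hx : δ x ≠ 0) (hx_pow : ∀ n ≠ 0, δ (((τ : E →L[𝕜] E) ^ n) x) = 0)
    (hx_inv : ∀ n ≠ 0, δ (((↑τ⁻¹ : E →L[𝕜] E) ^ n) x) = 0)
    (hpow : ∀ R : E →L[𝕜] E, Commute R τ →
      (fun n => δ (((τ : E →L[𝕜] E) ^ n) (R x))) =o[atTop] fun n => μ ^ n)
    (hinv : ∀ R : E →L[𝕜] E, Commute R τ →
      (fun n => δ (((↑τ⁻¹ : E →L[𝕜] E) ^ n) (R x))) =o[atTop] fun n => μ⁻¹ ^ n) :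
    μ ∈ spectrum 𝕜 (τ : E →L[𝕜] E) := by
  rw [spectrum.mem_iff]
  rintro ⟨S, hS⟩
  set T : E →L[𝕜] E := ↑τ
  set R : E →L[𝕜] E := ↑S⁻¹
  have hcomm : Commute R T := by
    refine Commute.units_inv_left ?_
    rw [hS]
    exact (Algebra.commute_algebraMap_left μ T).sub_left (Commute.refl T)
  have hres : μ • R x - T (R x) = x := by
    have := DFunLike.congr_fun S.mul_inv x
    rwa [hS, Algebra.algebraMap_eq_smul_one] at this
  have inv_apply (y : E) : (↑τ⁻¹ : E →L[𝕜] E) (T y) = y := DFunLike.congr_fun τ.inv_mul y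
  have hTR : δ (T (R x)) = 0 := by
    refine map_eq_zero_of_isLittleO_pow (x := T x) hμ ?_ (fun n => ?_)
      (hpow (T * R) ((Commute.refl T).mul_left hcomm))
    · rw [← map_smul, ← map_sub, hres]
    · simpa only [pow_succ] using! hx_pow (n + 1) n.succ_ne_zero
  have hR : δ (R x) = 0 := by
    refine map_eq_zero_of_isLittleO_pow (x := -μ⁻¹ • (↑τ⁻¹ : E →L[𝕜] E) x) (inv_ne_zero hμ) ?_
      (fun n => ?_) (hinv R hcomm)
    · nth_rw 3 [← hres]
      rw [map_sub, inv_apply, map_smul, smul_sub, smul_smul, neg_mul, inv_mul_cancel₀ hμ]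
      module
    · rw [map_smul, map_smul, smul_eq_mul]
      exact mul_eq_zero_of_right _ (by simpa only [pow_succ] using! hx_inv (n + 1) n.succ_ne_zero)
  refine hx ?_
  rw [← hres, map_sub, map_smul, hR, hTR, smul_zero, sub_zero]

theorem isLittleO_map_pow_of_semiconjBy_range {Q R S T : E →L[𝕜] E} (hQ : SemiconjBy Q S T)
    (hR : Commute R T) (hS : (fun n => S ^ n) =o[atTop] fun n => μ ^ n) (δ : StrongDual 𝕜 E)
    (x : E) : (fun n => δ ((T ^ n) (R (Q x)))) =o[atTop] fun n => μ ^ n := by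
  have heq (n : ℕ) : (T ^ n) (R (Q x)) = (R * Q) ((S ^ n) x) :=
    (DFunLike.congr_fun ((SemiconjBy.mul_left hR hQ).pow_right n) x).symm
  simp_rw [heq]
  exact (((δ ∘L (R * Q)) ∘L ContinuousLinearMap.apply 𝕜 E x).isBigO_comp _ _).trans_isLittleO hS

theorem isLittleO_map_pow_of_semiconjBy_of_map_eq {Q S T : E →L[𝕜] E} (hQ : SemiconjBy Q T S)
    {δ : StrongDual 𝕜 E} {c : 𝕜} (hc : c ≠ 0) (hδ : ∀ x, δ (Q x) = c * δ x)
    (hS : (fun n => S ^ n) =o[atTop] fun n => μ ^ n) (x : E) :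
    (fun n => δ ((T ^ n) x)) =o[atTop] fun n => μ ^ n := by
  have heq (n : ℕ) : c * δ ((T ^ n) x) = δ ((S ^ n) (Q x)) := by
    rw [← hδ]
    exact congrArg δ (DFunLike.congr_fun (hQ.pow_right n) x)
  rw [← isLittleO_const_mul_left_iff hc]
  simp_rw [heq]
  exact ((δ ∘L ContinuousLinearMap.apply 𝕜 E (Q x)).isBigO_comp _ _).trans_isLittleO hS

end Spectrum

/-! ### The spectrum of a weighted composition operator -/

section Operators

open Asymptotics

variable {φ k v w ψ χ q : ℂ → ℂ} {a b μ : ℂ} {ρ : ℝ} {Q S T U : H2 →L[ℂ] H2}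

theorem IsWeightedComp.exists_units_mul_operator (hψ : DifferentiableOn ℂ ψ (ball 0 1))
    (hχ : DifferentiableOn ℂ χ (ball 0 1)) {B C : ℝ} (hB : ∀ z ∈ ball (0 : ℂ) 1, ‖ψ z‖ ≤ B)
    (hC : ∀ z ∈ ball (0 : ℂ) 1, ‖χ z‖ ≤ C) (hψχ : ∀ z ∈ ball (0 : ℂ) 1, ψ z * χ z = 1) :
    ∃ A : (H2 →L[ℂ] H2)ˣ, IsWeightedComp ψ id A := by
  obtain ⟨M, hM, -⟩ := exists_mul_operator hψ hB
  obtain ⟨N, hN, -⟩ := exists_mul_operator hχ hC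
  refine ⟨⟨M, N, ?_, ?_⟩, hM⟩
  · exact (hM.mul hN (Set.mapsTo_id _)).eq one hψχ (Set.eqOn_refl _ _)
  · exact (hN.mul hM (Set.mapsTo_id _)).eq one (fun z hz => (mul_comm _ _).trans (hψχ z hz))
      (Set.eqOn_refl _ _)

theorem IsDiscAlgebraUnit.exists_units_mul_operator (hv : IsDiscAlgebraUnit v) :
    ∃ A : (H2 →L[ℂ] H2)ˣ, IsWeightedComp v id A := by
  obtain ⟨B, hB⟩ := hv.exists_norm_le
  obtain ⟨C, hC⟩ := hv.inv.exists_norm_le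
  exact IsWeightedComp.exists_units_mul_operator hv.differentiableOn hv.inv.differentiableOn hB hC
    fun z hz => mul_inv_cancel₀ (hv.ne_zero z (ball_subset_closedBall hz))

theorem IsWeightedComp.mul_operator_mul (hQ : IsWeightedComp q id Q) (hT : IsWeightedComp ψ φ T) :
    IsWeightedComp (fun z => q z * ψ z) φ (Q * T) :=
  hQ.mul hT (Set.mapsTo_id _)

theorem IsWeightedComp.semiconjBy (hQ : IsWeightedComp q id Q) (hS : IsWeightedComp ψ φ S)
    (hT : IsWeightedComp χ φ T) (hφ : Set.MapsTo φ (ball 0 1) (ball 0 1))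
    (h : ∀ z ∈ ball (0 : ℂ) 1, q z * ψ z = χ z * q (φ z)) : SemiconjBy Q S T :=
  (hQ.mul_operator_mul hS).eq (hT.mul hQ hφ) h (Set.eqOn_refl _ _)

theorem IsWeightedComp.commute (hQ : IsWeightedComp q id Q) (hS : IsWeightedComp ψ id S) :
    Commute Q S :=
  hQ.semiconjBy hS hS (Set.mapsTo_id _) fun _ _ => mul_comm _ _

namespace IsSupportedAtZeroOnOrbit

variable {x : H2} {τ : (H2 →L[ℂ] H2)ˣ}

theorem pow_apply_zero (hx : IsSupportedAtZeroOnOrbit φ x) (hT : IsWeightedComp ψ φ T)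
    (hφ : Set.MapsTo φ (ball 0 1) (ball 0 1)) {n : ℕ} (hn : n ≠ 0) :
    ((T ^ n) x).toFun 0 = 0 := by
  rw [hT.pow hφ n x 0 (by simp), hx.apply_iterate_zero n hn, mul_zero]

theorem inv_pow_apply_zero (hx : IsSupportedAtZeroOnOrbit φ x) (hτ : IsWeightedComp ψ φ τ)
    (hψ : ∀ z ∈ ball (0 : ℂ) 1, ψ z ≠ 0) (hφ : Set.MapsTo φ (ball 0 1) (ball 0 1))
    (hsurj : Set.SurjOn φ (ball 0 1) (ball 0 1)) {n : ℕ} (hn : n ≠ 0) :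
    (((↑τ⁻¹ : H2 →L[ℂ] H2) ^ n) x).toFun 0 = 0 := by
  obtain ⟨w, hw, hw0⟩ := hsurj.iterate n (mem_ball_self one_pos)
  have hmul : (τ : H2 →L[ℂ] H2) ^ n * (↑τ⁻¹ : H2 →L[ℂ] H2) ^ n = 1 := by
    rw [← Units.val_pow_eq_pow_val, ← Units.val_pow_eq_pow_val, ← Units.val_mul, inv_pow,
      mul_inv_cancel, Units.val_one]
  have hval := hτ.pow hφ n (((↑τ⁻¹ : H2 →L[ℂ] H2) ^ n) x) w hw
  rw [← mul_apply_eq_comp, hmul, one_apply_eq_self, hw0,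
    hx.apply_of_iterate_eq_zero n hn w hw hw0] at hval
  refine (mul_eq_zero.1 hval.symm).resolve_left (Finset.prod_ne_zero_iff.2 fun j _ => ?_)
  exact hψ _ (hφ.iterate j hw)

end IsSupportedAtZeroOnOrbit

namespace IsHyperbolicSymbol

theorem exists_isWeightedComp_weight (H : IsHyperbolicSymbol φ k a b ρ) (hψ : IsDiscAlgebraUnit ψ)
    (hT : IsWeightedComp ψ φ T) : ∃ U, IsWeightedComp k φ U := by
  obtain ⟨A, hA⟩ := (H.weight_unit.div hψ).exists_units_mul_operator
  refine ⟨A * T, fun f z hz => ?_⟩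
  have hAT : ((A * T) f).toFun z = k z / ψ z * ψ z * f.toFun (φ z) :=
    hA.mul_operator_mul hT f z hz
  rwa [div_mul_cancel₀ _ (hψ.ne_zero z (ball_subset_closedBall hz))] at hAT

theorem exists_units (H : IsHyperbolicSymbol φ k a b ρ) (hU : IsWeightedComp k φ U)
    (hv : IsDiscAlgebraUnit v) :
    ∃ τ : (H2 →L[ℂ] H2)ˣ, IsWeightedComp (fun z => v z * k z) φ τ := by
  obtain ⟨A, hA⟩ := hv.exists_units_mul_operator
  exact ⟨A * Unitary.toUnits ⟨U, hU.mem_unitary H.unitary_weight⟩, hA.mul_operator_mul hU⟩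

theorem exists_mul_operator_prod_iterate (H : IsHyperbolicSymbol φ k a b ρ)
    (hv : IsDiscAlgebraUnit v) (ha : ‖v a‖ < ‖μ‖) (hb : ‖v b‖ < ‖μ‖) :
    ∃ P : ℕ → H2 →L[ℂ] H2,
      (∀ n, IsWeightedComp (fun z => ∏ j ∈ Finset.range n, v (φ^[j] z)) id (P n)) ∧
        P =o[atTop] fun n => μ ^ n := by
  obtain ⟨M, hM, hMμ⟩ := exists_between (max_lt ha hb)
  obtain ⟨hMa, hMb⟩ := max_lt_iff.1 hM
  obtain ⟨C, hC⟩ := H.exists_prod_norm_iterate_le hv.continuousOn hMa hMb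
  have hdiff (n : ℕ) :
      DifferentiableOn ℂ (fun z => ∏ j ∈ Finset.range n, v (φ^[j] z)) (ball 0 1) :=
    DifferentiableOn.fun_finsetProd fun j _ => hv.differentiableOn.comp
      (H.differentiableOn.iterate H.unitary_weight.mapsTo j) fun z hz => H.iterate_mem_ball j hz
  choose P hP hnorm using fun n => IsWeightedComp.exists_mul_operator (hdiff n)
    fun z hz => (norm_prod _ _).trans_le (hC n z hz)
  exact ⟨P, hP, isLittleO_pow_of_norm_le ((norm_nonneg _).trans hMa.le) hMμ hnorm⟩

theorem isLittleO_pow (H : IsHyperbolicSymbol φ k a b ρ) (hU : IsWeightedComp k φ U)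
    (hv : IsDiscAlgebraUnit v) (hT : IsWeightedComp (fun z => v z * k z) φ T)
    (ha : ‖v a‖ < ‖μ‖) (hb : ‖v b‖ < ‖μ‖) : (fun n => T ^ n) =o[atTop] fun n => μ ^ n := by
  obtain ⟨P, hP, hPμ⟩ := H.exists_mul_operator_prod_iterate hv ha hb
  suffices hnorm : ∀ n, ‖T ^ n‖ = ‖P n‖ from
    (IsBigO.of_norm_eventuallyLE (Eventually.of_forall fun n => (hnorm n).le)).trans_isLittleO
      hPμ.norm_left
  intro n
  have hφ := H.unitary_weight.mapsTo
  have hfactor : T ^ n = P n * U ^ n :=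
    (hT.pow hφ n).eq ((hP n).mul_operator_mul (hU.pow hφ n))
      (fun z _ => Finset.prod_mul_distrib) (Set.eqOn_refl _ _)
  rw [hfactor, CStarRing.norm_mul_mem_unitary _ (pow_mem (hU.mem_unitary H.unitary_weight) n)]

theorem isLittleO_inv_pow (H : IsHyperbolicSymbol φ k a b ρ) (hU : IsWeightedComp k φ U)
    (hv : IsDiscAlgebraUnit v) {τ : (H2 →L[ℂ] H2)ˣ}
    (hτ : IsWeightedComp (fun z => v z * k z) φ τ) (hμ : μ ≠ 0)
    (ha : ‖μ‖ < ‖v a‖) (hb : ‖μ‖ < ‖v b‖) :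
    (fun n => (↑τ⁻¹ : H2 →L[ℂ] H2) ^ n) =o[atTop] fun n => μ⁻¹ ^ n := by
  have inv_lt {c : ℂ} (hc : ‖μ‖ < ‖v c‖) : ‖(v c)⁻¹‖ < ‖μ⁻¹‖ := by
    rw [norm_inv, norm_inv]
    exact inv_strictAnti₀ (norm_pos_iff.2 hμ) hc
  obtain ⟨P, hP, hPμ⟩ := H.exists_mul_operator_prod_iterate hv.inv (inv_lt ha) (inv_lt hb)
  suffices hnorm : ∀ n, ‖(↑τ⁻¹ : H2 →L[ℂ] H2) ^ n‖ = ‖P n‖ from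
    (IsBigO.of_norm_eventuallyLE (Eventually.of_forall fun n => (hnorm n).le)).trans_isLittleO
      hPμ.norm_left
  intro n
  have hφ := H.unitary_weight.mapsTo
  have hUn := pow_mem (hU.mem_unitary H.unitary_weight) n
  have hfactor : P n * (τ : H2 →L[ℂ] H2) ^ n = U ^ n := by
    refine ((hP n).mul_operator_mul (hτ.pow hφ n)).eq (hU.pow hφ n) (fun z hz => ?_)
      (Set.eqOn_refl _ _)
    refine Finset.prod_mul_distrib.symm.trans ?_
    refine Finset.prod_congr rfl fun j _ => inv_mul_cancel_left₀ (hv.ne_zero _ ?_) _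
    exact ball_subset_closedBall (H.iterate_mem_ball j hz)
  have hinv : (↑τ⁻¹ : H2 →L[ℂ] H2) ^ n = star (U ^ n) * P n := by
    rw [← Units.val_pow_eq_pow_val, inv_pow]
    refine Units.inv_eq_of_mul_eq_one_left ?_
    rw [Units.val_pow_eq_pow_val, mul_assoc, hfactor, Unitary.star_mul_self_of_mem hUn]
  rw [hinv, CStarRing.norm_mem_unitary_mul _ (Unitary.star_mem hUn)]

end IsHyperbolicSymbol

end Operators

section Interior

open Asymptotics

variable {φ k v q : ℂ → ℂ} {a b μ : ℂ} {ρ : ℝ} {Q T U : H2 →L[ℂ] H2}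

theorem IsWeightedComp.exists_mul_operator_sub_pow (c : ℂ) (s : ℕ) :
    ∃ Q : H2 →L[ℂ] H2, IsWeightedComp (fun z => (z - c) ^ s) id Q := by
  have hbound : ∀ z ∈ ball (0 : ℂ) 1, ‖(z - c) ^ s‖ ≤ (1 + ‖c‖) ^ s := fun z hz => by
    rw [norm_pow]
    gcongr
    exact (norm_sub_le z c).trans (by gcongr; exact (mem_ball_zero_iff.1 hz).le)
  obtain ⟨Q, hQ, -⟩ := exists_mul_operator (by fun_prop) hbound
  exact ⟨Q, hQ⟩

theorem IsDiscAlgebraUnit.norm_pos (hv : IsDiscAlgebraUnit v) {c : ℂ} (hc : ‖c‖ = 1) :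
    0 < ‖v c‖ :=
  norm_pos_iff.2 (hv.ne_zero c (mem_closedBall_zero_iff.2 hc.le))

theorem exists_div_pow_lt {x y r : ℝ} (hr : 1 < r) (hy : 0 < y) : ∃ s : ℕ, x / r ^ s < y := by
  obtain ⟨s, hs⟩ := pow_unbounded_of_one_lt (x / y) hr
  exact ⟨s, (div_lt_comm₀ hy (pow_pos (one_pos.trans hr) s)).1 hs⟩

theorem exists_lt_mul_pow {x y r : ℝ} (hr : 1 < r) (hx : 0 < x) : ∃ s : ℕ, y < x * r ^ s := by
  obtain ⟨s, hs⟩ := pow_unbounded_of_one_lt (y / x) hr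
  exact ⟨s, (div_lt_iff₀' hx).1 hs⟩

theorem IsWeightedComp.eval_mul_operator (hQ : IsWeightedComp q id Q) (z : ball (0 : ℂ) 1)
    (x : H2) : H2.eval z (Q x) = q z * H2.eval z x := by
  rw [H2.eval_apply, H2.eval_apply]
  exact hQ x z z.2

namespace IsHyperbolicSymbol

variable {τ : (H2 →L[ℂ] H2)ˣ}

theorem isDiscAlgebraUnit_ratio_repelling (H : IsHyperbolicSymbol φ k a b ρ) (s : ℕ) :
    IsDiscAlgebraUnit fun z => (k z / k b) ^ s :=
  (H.weight_unit.div (.const H.weight_repelling_ne_zero)).pow s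

theorem isDiscAlgebraUnit_ratio_attracting (H : IsHyperbolicSymbol φ k a b ρ) (s : ℕ) :
    IsDiscAlgebraUnit fun z => (k z / k a) ^ s :=
  (H.weight_unit.div (.const H.weight_attracting_ne_zero)).pow s

theorem norm_ratio_repelling (H : IsHyperbolicSymbol φ k a b ρ) : ‖k b / k a‖ = ρ := by
  rw [H.weight_repelling, mul_div_cancel_right₀ _ H.weight_attracting_ne_zero, Complex.norm_real,
    Real.norm_of_nonneg (zero_le_one.trans H.one_lt.le)]

theorem norm_ratio_attracting (H : IsHyperbolicSymbol φ k a b ρ) : ‖k a / k b‖ = ρ⁻¹ := by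
  rw [← inv_div, norm_inv, H.norm_ratio_repelling]

theorem exists_semiconjBy_isLittleO_pow_of_norm_repelling_lt (H : IsHyperbolicSymbol φ k a b ρ)
    (hU : IsWeightedComp k φ U) (hv : IsDiscAlgebraUnit v)
    (hT : IsWeightedComp (fun z => v z * k z) φ T) (hb : ‖v b‖ < ‖μ‖) :
    ∃ q Q S, IsWeightedComp q id Q ∧ q 0 ≠ 0 ∧ SemiconjBy Q S T ∧
      (fun n => S ^ n) =o[atTop] fun n => μ ^ n := by
  obtain ⟨s, hs⟩ := exists_div_pow_lt (x := ‖v a‖) H.one_lt ((norm_nonneg _).trans_lt hb)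
  obtain ⟨Q, hQ⟩ := IsWeightedComp.exists_mul_operator_sub_pow a s
  have hw := hv.mul (H.isDiscAlgebraUnit_ratio_repelling s)
  obtain ⟨S, hS⟩ := H.exists_units hU hw
  refine ⟨_, Q, S, hQ, ?_, hQ.semiconjBy hS hT H.unitary_weight.mapsTo fun z hz => ?_,
    H.isLittleO_pow hU hw hS ?_ ?_⟩
  · exact pow_ne_zero s
      (sub_ne_zero_of_mem_ball_of_norm_eq_one H.norm_attracting (mem_ball_self one_pos))
  · rw [H.sub_attracting z hz, mul_pow]
    ring
  · rw [norm_mul, norm_pow, H.norm_ratio_attracting, inv_pow]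
    exact hs
  · rwa [div_self H.weight_repelling_ne_zero, one_pow, mul_one]

theorem exists_semiconjBy_isLittleO_inv_pow_of_lt_norm_attracting
    (H : IsHyperbolicSymbol φ k a b ρ) (hU : IsWeightedComp k φ U) (hv : IsDiscAlgebraUnit v)
    (hτ : IsWeightedComp (fun z => v z * k z) φ τ) (hμ : μ ≠ 0) (ha : ‖μ‖ < ‖v a‖) :
    ∃ q Q S, IsWeightedComp q id Q ∧ q 0 ≠ 0 ∧ SemiconjBy Q S (↑τ⁻¹ : H2 →L[ℂ] H2) ∧
      (fun n => S ^ n) =o[atTop] fun n => μ⁻¹ ^ n := by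
  obtain ⟨s, hs⟩ := exists_lt_mul_pow (y := ‖μ‖) H.one_lt (hv.norm_pos H.norm_repelling)
  obtain ⟨Q, hQ⟩ := IsWeightedComp.exists_mul_operator_sub_pow b s
  have hw := hv.mul (H.isDiscAlgebraUnit_ratio_attracting s)
  obtain ⟨σ, hσ⟩ := H.exists_units hU hw
  have hconj : SemiconjBy Q (σ : H2 →L[ℂ] H2) τ :=
    hQ.semiconjBy hσ hτ H.unitary_weight.mapsTo fun z hz => by
      rw [H.sub_repelling z hz, mul_pow]
      ring
  refine ⟨_, Q, _, hQ, ?_, hconj.units_inv_right, H.isLittleO_inv_pow hU hw hσ hμ ?_ ?_⟩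
  · exact pow_ne_zero s
      (sub_ne_zero_of_mem_ball_of_norm_eq_one H.norm_repelling (mem_ball_self one_pos))
  · rwa [div_self H.weight_attracting_ne_zero, one_pow, mul_one]
  · rwa [norm_mul, norm_pow, H.norm_ratio_repelling]

theorem exists_semiconjBy_isLittleO_pow_of_norm_attracting_lt (H : IsHyperbolicSymbol φ k a b ρ)
    (hU : IsWeightedComp k φ U) (hv : IsDiscAlgebraUnit v)
    (hT : IsWeightedComp (fun z => v z * k z) φ T) (ha : ‖v a‖ < ‖μ‖) :
    ∃ q Q S, IsWeightedComp q id Q ∧ q 0 ≠ 0 ∧ SemiconjBy Q T S ∧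
      (fun n => S ^ n) =o[atTop] fun n => μ ^ n := by
  obtain ⟨s, hs⟩ := exists_div_pow_lt (x := ‖v b‖) H.one_lt ((norm_nonneg _).trans_lt ha)
  obtain ⟨Q, hQ⟩ := IsWeightedComp.exists_mul_operator_sub_pow b s
  have hr := H.isDiscAlgebraUnit_ratio_attracting s
  have hw := hv.div hr
  obtain ⟨S, hS⟩ := H.exists_units hU hw
  refine ⟨_, Q, S, hQ, ?_, hQ.semiconjBy hT hS H.unitary_weight.mapsTo fun z hz => ?_,
    H.isLittleO_pow hU hw hS ?_ ?_⟩
  · exact pow_ne_zero s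
      (sub_ne_zero_of_mem_ball_of_norm_eq_one H.norm_repelling (mem_ball_self one_pos))
  · have := hr.ne_zero z (ball_subset_closedBall hz)
    rw [H.sub_repelling z hz, mul_pow]
    field_simp
  · rwa [div_self H.weight_attracting_ne_zero, one_pow, div_one]
  · rwa [norm_div, norm_pow, H.norm_ratio_repelling]

theorem exists_semiconjBy_isLittleO_inv_pow_of_lt_norm_repelling
    (H : IsHyperbolicSymbol φ k a b ρ) (hU : IsWeightedComp k φ U) (hv : IsDiscAlgebraUnit v)
    (hτ : IsWeightedComp (fun z => v z * k z) φ τ) (hμ : μ ≠ 0) (hb : ‖μ‖ < ‖v b‖) :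
    ∃ q Q S, IsWeightedComp q id Q ∧ q 0 ≠ 0 ∧ SemiconjBy Q (↑τ⁻¹ : H2 →L[ℂ] H2) S ∧
      (fun n => S ^ n) =o[atTop] fun n => μ⁻¹ ^ n := by
  obtain ⟨s, hs⟩ := exists_lt_mul_pow (y := ‖μ‖) H.one_lt (hv.norm_pos H.norm_attracting)
  obtain ⟨Q, hQ⟩ := IsWeightedComp.exists_mul_operator_sub_pow a s
  have hr := H.isDiscAlgebraUnit_ratio_repelling s
  have hw := hv.div hr
  obtain ⟨σ, hσ⟩ := H.exists_units hU hw
  have hconj : SemiconjBy Q (τ : H2 →L[ℂ] H2) σ :=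
    hQ.semiconjBy hτ hσ H.unitary_weight.mapsTo fun z hz => by
      have := hr.ne_zero z (ball_subset_closedBall hz)
      rw [H.sub_attracting z hz, mul_pow]
      field_simp
  refine ⟨_, Q, _, hQ, ?_, hconj.units_inv_right, H.isLittleO_inv_pow hU hw hσ hμ ?_ ?_⟩
  · exact pow_ne_zero s
      (sub_ne_zero_of_mem_ball_of_norm_eq_one H.norm_attracting (mem_ball_self one_pos))
  · rwa [norm_div, norm_pow, H.norm_ratio_attracting, inv_pow, div_inv_eq_mul]
  · rwa [div_self H.weight_repelling_ne_zero, one_pow, div_one]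

theorem mem_spectrum_of_isSupportedAtZeroOnOrbit (H : IsHyperbolicSymbol φ k a b ρ)
    (hv : IsDiscAlgebraUnit v) (hτ : IsWeightedComp (fun z => v z * k z) φ τ) (hμ : μ ≠ 0) {x : H2}
    (hx : IsSupportedAtZeroOnOrbit φ x)
    (hpow : ∀ R : H2 →L[ℂ] H2, Commute R τ → (fun n => H2.eval ⟨0, mem_ball_self one_pos⟩
      (((τ : H2 →L[ℂ] H2) ^ n) (R x))) =o[atTop] fun n => μ ^ n)
    (hinv : ∀ R : H2 →L[ℂ] H2, Commute R τ → (fun n => H2.eval ⟨0, mem_ball_self one_pos⟩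
      (((↑τ⁻¹ : H2 →L[ℂ] H2) ^ n) (R x))) =o[atTop] fun n => μ⁻¹ ^ n) :
    μ ∈ spectrum ℂ (τ : H2 →L[ℂ] H2) := by
  have hφ := H.unitary_weight.mapsTo
  refine mem_spectrum_of_isLittleO_pow hμ (x := x) ?_ (fun n hn => ?_) (fun n hn => ?_) hpow hinv
  · exact (H2.eval_apply _ x).trans_ne hx.apply_zero_ne_zero
  · exact (H2.eval_apply _ _).trans (hx.pow_apply_zero hτ hφ hn)
  · refine (H2.eval_apply _ _).trans (hx.inv_pow_apply_zero hτ (fun z hz => ?_) hφ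
      H.unitary_weight.surjOn hn)
    exact (hv.mul H.weight_unit).ne_zero z (ball_subset_closedBall hz)

theorem mem_spectrum_of_norm_repelling_lt (H : IsHyperbolicSymbol φ k a b ρ)
    (hU : IsWeightedComp k φ U) (hv : IsDiscAlgebraUnit v)
    (hτ : IsWeightedComp (fun z => v z * k z) φ τ) (hb : ‖v b‖ < ‖μ‖) (ha : ‖μ‖ < ‖v a‖) :
    μ ∈ spectrum ℂ (τ : H2 →L[ℂ] H2) := by
  have hμ : μ ≠ 0 := norm_pos_iff.1 ((norm_nonneg _).trans_lt hb)
  obtain ⟨p, A, S, hA, hp, hAS, hS⟩ :=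
    H.exists_semiconjBy_isLittleO_pow_of_norm_repelling_lt hU hv hτ hb
  obtain ⟨q, B, S', hB, hq, hBS', hS'⟩ :=
    H.exists_semiconjBy_isLittleO_inv_pow_of_lt_norm_attracting hU hv hτ hμ ha
  obtain ⟨e, he⟩ := H.exists_isSupportedAtZeroOnOrbit
  have hφ := H.unitary_weight.mapsTo
  have hAB : A (B e) = B (A e) := DFunLike.congr_fun (hA.commute hB) e
  refine H.mem_spectrum_of_isSupportedAtZeroOnOrbit hv hτ hμ
    ((he.mul_operator hφ hB hq).mul_operator hφ hA hp)
    (fun R hR => isLittleO_map_pow_of_semiconjBy_range hAS hR hS _ _) fun R hR => ?_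
  rw [hAB]
  exact isLittleO_map_pow_of_semiconjBy_range hBS' hR.units_inv_right hS' _ _

theorem mem_spectrum_of_norm_attracting_lt (H : IsHyperbolicSymbol φ k a b ρ)
    (hU : IsWeightedComp k φ U) (hv : IsDiscAlgebraUnit v)
    (hτ : IsWeightedComp (fun z => v z * k z) φ τ) (ha : ‖v a‖ < ‖μ‖) (hb : ‖μ‖ < ‖v b‖) :
    μ ∈ spectrum ℂ (τ : H2 →L[ℂ] H2) := by
  have hμ : μ ≠ 0 := norm_pos_iff.1 ((norm_nonneg _).trans_lt ha)
  obtain ⟨p, A, S, hA, hp, hAS, hS⟩ :=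
    H.exists_semiconjBy_isLittleO_pow_of_norm_attracting_lt hU hv hτ ha
  obtain ⟨q, B, S', hB, hq, hBS', hS'⟩ :=
    H.exists_semiconjBy_isLittleO_inv_pow_of_lt_norm_repelling hU hv hτ hμ hb
  obtain ⟨e, he⟩ := H.exists_isSupportedAtZeroOnOrbit
  exact H.mem_spectrum_of_isSupportedAtZeroOnOrbit hv hτ hμ he
    (fun R _ => isLittleO_map_pow_of_semiconjBy_of_map_eq hAS hp (hA.eval_mul_operator _) hS _)
    (fun R _ => isLittleO_map_pow_of_semiconjBy_of_map_eq hBS' hq (hB.eval_mul_operator _) hS' _)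

end IsHyperbolicSymbol

end Interior

section Annulus

namespace IsHyperbolicSymbol

variable {φ k v ψ : ℂ → ℂ} {a b μ ν : ℂ} {ρ : ℝ} {T U : H2 →L[ℂ] H2} {τ : (H2 →L[ℂ] H2)ˣ}

theorem mem_annulus_of_mem_spectrum (H : IsHyperbolicSymbol φ k a b ρ)
    (hU : IsWeightedComp k φ U) (hv : IsDiscAlgebraUnit v)
    (hτ : IsWeightedComp (fun z => v z * k z) φ τ) (hμ : μ ∈ spectrum ℂ (τ : H2 →L[ℂ] H2)) :
    min ‖v a‖ ‖v b‖ ≤ ‖μ‖ ∧ ‖μ‖ ≤ max ‖v a‖ ‖v b‖ := by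
  have hμ0 : μ ≠ 0 := spectrum.ne_zero_of_mem_of_unit hμ
  refine ⟨not_lt.1 fun hlt => ?_, not_lt.1 fun hlt => ?_⟩
  · obtain ⟨ha, hb⟩ := lt_min_iff.1 hlt
    exact notMem_spectrum_of_isLittleO_inv_pow hμ0 (H.isLittleO_inv_pow hU hv hτ hμ0 ha hb) hμ
  · obtain ⟨ha, hb⟩ := max_lt_iff.1 hlt
    exact notMem_spectrum_of_isLittleO_pow hμ0 (H.isLittleO_pow hU hv hτ ha hb) hμ

theorem mem_spectrum_of_mem_Ioo (H : IsHyperbolicSymbol φ k a b ρ)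
    (hU : IsWeightedComp k φ U) (hv : IsDiscAlgebraUnit v)
    (hτ : IsWeightedComp (fun z => v z * k z) φ τ)
    (hμ : ‖μ‖ ∈ Set.Ioo (min ‖v a‖ ‖v b‖) (max ‖v a‖ ‖v b‖)) :
    μ ∈ spectrum ℂ (τ : H2 →L[ℂ] H2) := by
  rcases le_total ‖v a‖ ‖v b‖ with hle | hle
  · rw [min_eq_left hle, max_eq_right hle] at hμ
    exact H.mem_spectrum_of_norm_attracting_lt hU hv hτ hμ.1 hμ.2
  · rw [min_eq_right hle, max_eq_left hle] at hμ
    exact H.mem_spectrum_of_norm_repelling_lt hU hv hτ hμ.1 hμ.2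

theorem exp_mul_I_mul_mem_spectrum (H : IsHyperbolicSymbol φ k a b ρ)
    (hT : IsWeightedComp ψ φ T) (θ : ℝ) (hμ : μ ∈ spectrum ℂ T) :
    Complex.exp (θ * Complex.I) * μ ∈ spectrum ℂ T := by
  have ha := H.norm_attracting
  have hb := H.norm_repelling
  have hab := H.attracting_ne_repelling
  set s := θ / Real.log ρ
  set c := Complex.exp (θ * Complex.I)
  obtain ⟨A, hA⟩ := IsWeightedComp.exists_units_mul_operator
    (differentiableOn_orbitCharacter ha hb hab s) (differentiableOn_orbitCharacter ha hb hab (-s))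
    (fun _ => norm_orbitCharacter_le ha hb hab s) (fun _ => norm_orbitCharacter_le ha hb hab (-s))
    fun z _ => orbitCharacter_mul_orbitCharacter_neg s z
  have hconj : SemiconjBy (A : H2 →L[ℂ] H2) (c • T) T :=
    hA.semiconjBy (hT.smul c) hT H.unitary_weight.mapsTo fun z hz => by
      rw [H.orbitCharacter_map θ hz]
      ring
  have hT_eq : (A : H2 →L[ℂ] H2) * (c • T) * ↑A⁻¹ = T := by
    rw [hconj.eq, mul_assoc, A.mul_inv, mul_one]
  have hspec : spectrum ℂ (c • T) = spectrum ℂ T := by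
    rw [← spectrum.units_conjugate (u := A), hT_eq]
  rw [← hspec]
  exact (spectrum.smul_mem_smul_iff (r := Units.mk0 c (Complex.exp_ne_zero _))).2 hμ

theorem mem_spectrum_of_norm_eq (H : IsHyperbolicSymbol φ k a b ρ) (hT : IsWeightedComp ψ φ T)
    (hμ : μ ∈ spectrum ℂ T) (hν : ‖ν‖ = ‖μ‖) : ν ∈ spectrum ℂ T := by
  obtain ⟨θ, hθ⟩ : ∃ θ : ℝ, Complex.exp (θ * Complex.I) * μ = ν := by
    refine ⟨ν.arg - μ.arg, ?_⟩
    nth_rw 2 [← Complex.norm_mul_exp_arg_mul_I μ]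
    rw [mul_left_comm, ← hν, ← Complex.exp_add]
    push_cast
    rw [← add_mul, sub_add_cancel, Complex.norm_mul_exp_arg_mul_I]
  exact hθ ▸ H.exp_mul_I_mul_mem_spectrum hT θ hμ

theorem spectrum_eq_annulus (H : IsHyperbolicSymbol φ k a b ρ)
    (hU : IsWeightedComp k φ U) (hv : IsDiscAlgebraUnit v)
    (hτ : IsWeightedComp (fun z => v z * k z) φ τ) :
    spectrum ℂ (τ : H2 →L[ℂ] H2) =
      {μ : ℂ | min ‖v a‖ ‖v b‖ ≤ ‖μ‖ ∧ ‖μ‖ ≤ max ‖v a‖ ‖v b‖} := by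
  have hsub := fun μ => H.mem_annulus_of_mem_spectrum (μ := μ) hU hv hτ
  refine Set.Subset.antisymm hsub fun ν hν => ?_
  have hrot := fun μ => H.mem_spectrum_of_norm_eq (μ := μ) (ν := ν) hτ
  by_cases heq : ‖v a‖ = ‖v b‖
  · obtain ⟨μ, hμ⟩ := spectrum.nonempty (τ : H2 →L[ℂ] H2)
    have hμ' := hsub μ hμ
    simp only [heq, min_self, max_self, Set.mem_ofPred_eq] at hν hμ'
    exact hrot μ hμ ((hν.2.antisymm hν.1).trans (hμ'.1.antisymm hμ'.2))
  · have hclosure : ‖ν‖ ∈ closure (Set.Ioo (min ‖v a‖ ‖v b‖) (max ‖v a‖ ‖v b‖)) := by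
      rwa [closure_Ioo (min_lt_max.2 heq).ne]
    have hmem : (‖ν‖ : ℂ) ∈ closure (spectrum ℂ (τ : H2 →L[ℂ] H2)) := by
      refine map_mem_closure Complex.continuous_ofReal hclosure fun t ht => ?_
      refine H.mem_spectrum_of_mem_Ioo hU hv hτ ?_
      rwa [Complex.norm_real,
        Real.norm_of_nonneg ((le_min (norm_nonneg _) (norm_nonneg _)).trans ht.1.le)]
    rw [(spectrum.isClosed _).closure_eq] at hmem
    exact hrot _ hmem (by simp)

theorem norm_weight_repelling (H : IsHyperbolicSymbol φ k a b ρ) : ‖k b‖ = √ρ := by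
  have hρ : 0 ≤ ρ := zero_le_one.trans H.one_lt.le
  rw [H.weight_repelling, norm_mul, Complex.norm_real, H.norm_weight_attracting,
    Real.norm_of_nonneg hρ, ← div_eq_mul_inv, Real.div_sqrt]

theorem spectrum_eq_annulus_of_isWeightedComp (H : IsHyperbolicSymbol φ k a b ρ)
    (hψ : IsDiscAlgebraUnit ψ) (hT : IsWeightedComp ψ φ T) :
    spectrum ℂ T = {μ : ℂ | min (‖ψ a‖ * √ρ) (‖ψ b‖ / √ρ) ≤ ‖μ‖ ∧
      ‖μ‖ ≤ max (‖ψ a‖ * √ρ) (‖ψ b‖ / √ρ)} := by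
  have hv := hψ.div H.weight_unit
  obtain ⟨U, hU⟩ := H.exists_isWeightedComp_weight hψ hT
  obtain ⟨τ, hτ⟩ := H.exists_units hU hv
  obtain rfl : ↑τ = T := hτ.eq hT (fun z hz => div_mul_cancel₀ _
    (H.weight_unit.ne_zero z (ball_subset_closedBall hz))) (Set.eqOn_refl _ _)
  rw [H.spectrum_eq_annulus hU hv hτ, norm_div, norm_div, H.norm_weight_attracting,
    H.norm_weight_repelling, div_inv_eq_mul]

end IsHyperbolicSymbol

end Annulus

/-- Let `φ` be a hyperbolic automorphism of `𝔻` with attracting fixed point `a` and repelling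
fixed point `b` on the boundary, `ρ = φ'(a)⁻¹ = φ'(b) > 1`, and let `ψ` be holomorphic on `𝔻`,
continuous on the closed disc and bounded away from zero. Then the spectrum of the weighted
composition operator `C_{ψ,φ}` on `H²(𝔻)` is the annulus
`{λ : min(|ψ(a)|√ρ, |ψ(b)|/√ρ) ≤ |λ| ≤ max(|ψ(a)|√ρ, |ψ(b)|/√ρ)}`. -/
theorem stmt17 (φ φinv : ℂ → ℂ)
    (hφc : ContinuousOn φ (closedBall 0 1))
    (hφ : DifferentiableOn ℂ φ (ball 0 1))
    (hφinv : DifferentiableOn ℂ φinv (ball 0 1))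
    (hφm : Set.MapsTo φ (ball 0 1) (ball 0 1))
    (hφinvm : Set.MapsTo φinv (ball 0 1) (ball 0 1))
    (hleft : ∀ z ∈ ball (0 : ℂ) 1, φinv (φ z) = z)
    (hright : ∀ z ∈ ball (0 : ℂ) 1, φ (φinv z) = z)
    (a b : ℂ) (ha : ‖a‖ = 1) (hb : ‖b‖ = 1) (hab : a ≠ b)
    (hfixa : φ a = a) (hfixb : φ b = b)
    (honly : ∀ z ∈ closedBall (0 : ℂ) 1, φ z = z → z = a ∨ z = b)
    (ρ : ℝ) (hρ : 1 < ρ)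
    (hderiva : deriv φ a = ((ρ : ℂ))⁻¹) (hderivb : deriv φ b = (ρ : ℂ))
    (hDW : ∀ z ∈ ball (0 : ℂ) 1, Tendsto (fun n => φ^[n] z) atTop (nhds a))
    (ψ : ℂ → ℂ)
    (hψc : ContinuousOn ψ (closedBall 0 1))
    (hψ : DifferentiableOn ℂ ψ (ball 0 1))
    (hψ0 : ∃ ε > (0 : ℝ), ∀ z ∈ ball (0 : ℂ) 1, ε ≤ ‖ψ z‖)
    (T : H2 →L[ℂ] H2)
    (hT : ∀ f : H2, ∀ z ∈ ball (0 : ℂ) 1, (T f).toFun z = ψ z * f.toFun (φ z)) :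
    spectrum ℂ T =
      {lam : ℂ |
        min (‖ψ a‖ * Real.sqrt ρ) (‖ψ b‖ / Real.sqrt ρ) ≤ ‖lam‖ ∧
        ‖lam‖ ≤ max (‖ψ a‖ * Real.sqrt ρ) (‖ψ b‖ / Real.sqrt ρ)} := by
  obtain ⟨ε, hε, hψε⟩ := hψ0
  obtain ⟨k, H⟩ := isHyperbolicSymbol_of_automorphism hφc hφ hφinv hφm hφinvm ⟨hleft, hright⟩
    ha hb hab hfixa hfixb hρ hderiva
  exact H.spectrum_eq_annulus_of_isWeightedComp (.of_forall_le_norm hψ hψc hε hψε) hT
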